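/- Let p be a prime, let ε be a real number with 0 < ε ≤ 3/4, let α be the unique positive real root of the cubic 4x³ + (12−4ε)x² + (9−4ε)x + (8ε−7), and let A ⊆ ℤ/pℤ be a nonempty subset with |2A| = 2|A| + r. Suppose |2A| ≤ (2+α)|A| − 3 and |2A| ≤ ε·p. Then there exist arithmetic progressions P_A and P_{2A} in ℤ/pℤ with a common difference such that A ⊆ P_A, |P_A| ≤ |A| + r + 1, P_{2A} ⊆ 2A, and |P_{2A}| ≥ 2|A| − 1. -/

import Mathlib

/-!
Write `n = |A|` and `s = |A + A|`. If every nontrivial Fourier coefficient of `A` had modulus at most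
`κ n` with `κ = (1 + 2 α) / 3`, then counting the `n ^ 2` solutions of `a + b = c` with `a, b ∈ A` and
`c ∈ A + A` would give, by Cauchy–Schwarz and Parseval, `n (p - s) ≤ κ² (p - n) s` (`bias_bound`). The
cubic defining `α` says precisely that `κ² (2 + α - ε) = 1 - ε`, which makes this impossible
(`arith`). So some coefficient is large, and then some dilate of `A` has a part `A'` with
`3 |A'| ≥ s + 4` inside an interval of `(p + 1) / 2` residues (`norm_charSum_le`, `exists_half`).

Sums of two elements of `A'` do not wrap around, so `A'` may be treated as a set of integers, with
`|A' + A'| ≤ 3 |A'| - 4`. Freiman's `3k - 4` theorem (`freiman`, deduced from Kneser's theorem for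
`ℤ/lℤ`) puts `A'` into a progression with at most `s - |A'| + 1` terms, and `A' + A'` contains an
interval of length `2 |A'| - 1` for the same difference (`long_interval`).

This passes to `A` by duality (`core`). The complement of `A + A` misses that long interval, so its
negative `C₀` lies in a short one, and `A' + C₀` is disjoint from `-A`. This sumset is therefore so
small that `long_interval` applies to it too, and the long interval it contains confines `A` to an
interval of length below `p / 2`. There the problem is one about integers, and `two_layer` and
`long_interval`, applied to `A` itself, give the two progressions (`good_of_short`).
-/

open Finset Pointwise

/-- `P` is an arithmetic progression in `ZMod p` with difference `g`. -/
def IsAPWith {p : ℕ} (g : ZMod p) (P : Finset (ZMod p)) : Prop :=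
  ∃ a : ZMod p, ∃ k : ℕ, 1 ≤ k ∧ P = (Finset.range k).image (fun i : ℕ => a + (i : ZMod p) * g)

/-! ### Long intervals in sumsets of integers -/

/-- Pigeonhole for a missing sum: if `z ∉ A + C`, then `A` and `z - C` are disjoint, so their
parts in `[lo, hi]` have total size at most `hi + 1 - lo`. -/
lemma miss_count (A C : Finset ℤ) (z lo hi : ℤ) (hz : z ∉ A + C) (h : lo ≤ hi + 1) :
    (#{a ∈ A | lo ≤ a ∧ a ≤ hi} : ℤ) + #{c ∈ C | z - hi ≤ c ∧ c ≤ z - lo} ≤ hi + 1 - lo := by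
  have hinj : Function.Injective (fun c : ℤ => z - c) := fun a b hab => by
    simpa using hab
  rw [← card_image_of_injective {c ∈ C | z - hi ≤ c ∧ c ≤ z - lo} hinj]
  have hd : Disjoint {a ∈ A | lo ≤ a ∧ a ≤ hi}
      (image (fun c : ℤ => z - c) {c ∈ C | z - hi ≤ c ∧ c ≤ z - lo}) := by
    rw [disjoint_left]
    intro a ha hb
    simp only [mem_image, mem_filter] at ha hb
    obtain ⟨c, hc, rfl⟩ := hb
    exact hz (mem_add.2 ⟨_, ha.1, c, hc.1, by ring⟩)
  have hsub : {a ∈ A | lo ≤ a ∧ a ≤ hi} ∪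
      (image (fun c : ℤ => z - c) {c ∈ C | z - hi ≤ c ∧ c ≤ z - lo}) ⊆ Icc lo hi := by
    intro a ha
    simp only [mem_union, mem_image, mem_filter, mem_Icc] at ha ⊢
    rcases ha with ha | ⟨c, hc, rfl⟩
    · exact ha.2
    · constructor <;> linarith [hc.2.1, hc.2.2]
  have := card_le_card hsub
  rw [card_union_of_disjoint hd, Int.card_Icc] at this
  omega

/-- If `A, C ⊆ [0, l]` have total size at least `l + 3`, then every residue modulo `l` is
represented in `A + C` by `z` or by `z + l`. -/
lemma cover (A C : Finset ℤ) (l : ℤ) (hA : ∀ a ∈ A, 0 ≤ a ∧ a ≤ l) (hC : ∀ c ∈ C, 0 ≤ c ∧ c ≤ l)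
    (hcard : l + 3 ≤ (#A : ℤ) + #C) (z : ℤ) (hz0 : 0 ≤ z) (hzl : z ≤ l) :
    z ∈ A + C ∨ z + l ∈ A + C := by
  by_contra! hcon
  have h1 := miss_count A C z 0 z hcon.1 (by omega)
  have h2 := miss_count A C (z + l) z l hcon.2 (by omega)
  have hAu : A ⊆ {a ∈ A | 0 ≤ a ∧ a ≤ z} ∪ {a ∈ A | z ≤ a ∧ a ≤ l} := by
    intro a ha
    have := hA a ha
    simp only [mem_union, mem_filter, ha, true_and]
    omega
  have hCu : C ⊆ {a ∈ C | z - z ≤ a ∧ a ≤ z - 0} ∪ {a ∈ C | z + l - l ≤ a ∧ a ≤ z + l - z} := by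
    intro a ha
    have := hC a ha
    simp only [mem_union, mem_filter, ha, true_and]
    omega
  have h3 := (card_le_card hAu).trans (card_union_le _ _)
  have h4 := (card_le_card hCu).trans (card_union_le _ _)
  omega

/-- Counting `A + C` in the two layers `[0, l]` and `[l, 2l]`: every residue is hit at least once,
those in `D` twice, and only the point `l` is shared by the layers. -/
lemma two_layer (A C D : Finset ℤ) (l : ℤ) (hA : ∀ a ∈ A, 0 ≤ a ∧ a ≤ l)
    (hC : ∀ c ∈ C, 0 ≤ c ∧ c ≤ l) (hcard : l + 3 ≤ (#A : ℤ) + #C)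
    (hD : ∀ d ∈ D, 0 ≤ d ∧ d ≤ l ∧ d ∈ A + C ∧ d + l ∈ A + C) (hl : 0 ≤ l) :
    l + #D ≤ (#(A + C) : ℤ) := by
  set E : Finset ℤ := {z ∈ Icc 0 l | z ∈ A + C} with hE
  set E' : Finset ℤ := {z ∈ Icc 0 l | z + l ∈ A + C} with hE'
  have hun : Icc 0 l ⊆ E ∪ E' := by
    intro z hz
    have hz' := mem_Icc.1 hz
    simp only [hE, hE', mem_union, mem_filter, hz, true_and]
    exact cover A C l hA hC hcard z hz'.1 hz'.2
  have hin : D ⊆ E ∩ E' := by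
    intro d hd
    have := hD d hd
    simp only [hE, hE', mem_inter, mem_filter, mem_Icc]
    tauto
  have hinj : Function.Injective (fun z : ℤ => z + l) := add_left_injective l
  have hsub : E ∪ E'.image (fun z => z + l) ⊆ A + C := by
    intro z hz
    simp only [hE, hE', mem_union, mem_filter, mem_image] at hz
    rcases hz with hz | ⟨w, hw, rfl⟩
    · exact hz.2
    · exact hw.2
  have hint : E ∩ E'.image (fun z => z + l) ⊆ {l} := by
    intro z hz
    simp only [hE, hE', mem_inter, mem_filter, mem_image, mem_Icc, mem_singleton] at hz ⊢
    obtain ⟨h1, w, hw, rfl⟩ := hz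
    omega
  have h1 := card_le_card hun
  have h2 := card_le_card hin
  have h3 := card_le_card hsub
  have h4 := card_le_card hint
  have h5 := card_union_add_card_inter E E'
  have h6 := card_union_add_card_inter E (E'.image (fun z => z + l))
  rw [card_image_of_injective _ hinj] at h6
  rw [Int.card_Icc] at h1
  rw [card_singleton] at h4
  omega

/-- A sumset `A + C` that is not too large contains an interval of length `|A| + |C| - 1`. Let
`x ≤ l` be the last missing element of the lower layer and `y + l` the first missing one of the
upper layer, outside values counting as missing. If `x < y`, everything strictly between `x` and
`y + l` is a sum, and pigeonhole at `x` and at `y + l` shows that this range is long. A crossing pair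
`y < x` with nothing missing between would make `A + C` too large by `two_layer`. -/
lemma long_interval (A C : Finset ℤ) (l m : ℤ)
    (hA : ∀ a ∈ A, 0 ≤ a ∧ a ≤ l) (h0A : 0 ∈ A) (hlA : l ∈ A)
    (hC : ∀ c ∈ C, 0 ≤ c ∧ c ≤ m) (h0C : 0 ∈ C) (hml : m ≤ l)
    (hcard : l + 3 ≤ (#A : ℤ) + #C) (hs : (#(A + C) : ℤ) ≤ #A + 2 * #C - 4) :
    ∃ w : ℤ, ∀ z, w ≤ z → z < w + (#A + #C - 1) → z ∈ A + C := by
  have hm0 : 0 ≤ m := (hC 0 h0C).2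
  have hC' : ∀ c ∈ C, 0 ≤ c ∧ c ≤ l := fun c hc => ⟨(hC c hc).1, (hC c hc).2.trans hml⟩
  have hrange : ∀ z ∈ A + C, 0 ≤ z ∧ z ≤ l + m := by
    intro z hz
    obtain ⟨a, ha, c, hc, rfl⟩ := mem_add.1 hz
    have := hA a ha
    have := hC c hc
    omega
  have hcov := cover A C l hA hC' hcard
  -- the values `-1` and `l + m + 1` serve as sentinels: they are never sums
  have key1 : ∀ x y, x ∉ A + C → y + l ∉ A + C → -1 ≤ x → y ≤ m + 1 →
      (#{a ∈ A | 0 ≤ a ∧ a ≤ x} : ℤ) + #{a ∈ A | l - m + y ≤ a ∧ a ≤ l} +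
        (#{c ∈ C | 0 ≤ c ∧ c ≤ x} + #{c ∈ C | y ≤ c ∧ c ≤ m}) ≤ x + m - y + 2 := by
    intro x y hx hy hx1 hy1
    have h1 := miss_count A C x 0 x hx (by omega)
    have h2 := miss_count A C (y + l) (l - m + y) l hy (by omega)
    rw [show x - x = 0 by ring, show x - 0 = x by ring] at h1
    rw [show y + l - l = y by ring, show y + l - (l - m + y) = m by ring] at h2
    omega
  have gap : ∀ (B : Finset ℤ) (x y t : ℤ), (∀ b ∈ B, 0 ≤ b ∧ b ≤ t) → x < y →
      (#B : ℤ) ≤ #{b ∈ B | 0 ≤ b ∧ b ≤ x} + #{b ∈ B | y ≤ b ∧ b ≤ t} + (y - x - 1) := by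
    intro B x y t hB hxy
    have hsub : B ⊆ ({b ∈ B | 0 ≤ b ∧ b ≤ x} ∪ {b ∈ B | y ≤ b ∧ b ≤ t}) ∪ Ioo x y := by
      intro b hb
      have := hB b hb
      simp only [mem_union, mem_filter, hb, true_and, mem_Ioo]
      omega
    have h1 := (card_le_card hsub).trans (card_union_le _ _)
    have h2 := card_union_le {b ∈ B | 0 ≤ b ∧ b ≤ x} {b ∈ B | y ≤ b ∧ b ≤ t}
    rw [Int.card_Ioo] at h1
    omega
  -- no crossing pair of missing elements
  have nocross : ∀ n : ℕ, ∀ x y, x ∉ A + C → y + l ∉ A + C → 0 ≤ y → x ≤ l → y < x →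
      x - y ≤ n → False := by
    intro n
    induction n with
    | zero => intro x y _ _ _ _ h1 h2; push_cast at h2; omega
    | succ n ih =>
      intro x y hx hy hy0 hxl hyx hn
      have hxm : x ≤ m := by
        by_contra! h
        rcases hcov x (by omega) hxl with h1 | h1
        · exact hx h1
        · have := (hrange _ h1).2; omega
      by_cases hmid : ∀ z, y < z → z < x → z ∈ A + C ∧ z + l ∈ A + C
      · have hD := two_layer A C (C ∪ Ioo y x) l hA hC' hcard (by
          intro d hd
          rw [mem_union, mem_Ioo] at hd
          rcases hd with hd | hd
          · refine ⟨(hC' d hd).1, (hC' d hd).2, ?_, ?_⟩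
            · simpa using add_mem_add h0A hd
            · simpa [add_comm] using add_mem_add hlA hd
          · exact ⟨by omega, by omega, hmid d hd.1 hd.2⟩) (by omega)
        have h5 := card_union_add_card_inter C (Ioo y x)
        rw [Int.card_Ioo] at h5
        have h1 := key1 x y hx hy (by omega) (by omega)
        have h6 := card_union_add_card_inter {c ∈ C | 0 ≤ c ∧ c ≤ x} {c ∈ C | y ≤ c ∧ c ≤ m}
        have h7 : C ⊆ {c ∈ C | 0 ≤ c ∧ c ≤ x} ∪ {c ∈ C | y ≤ c ∧ c ≤ m} := by
          intro b hb
          have := hC b hb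
          simp only [mem_union, mem_filter, hb, true_and]
          omega
        have h8 : C ∩ Ioo y x ⊆ {c ∈ C | 0 ≤ c ∧ c ≤ x} ∩ {c ∈ C | y ≤ c ∧ c ≤ m} := by
          intro b hb
          rw [mem_inter, mem_Ioo] at hb
          have := hC b hb.1
          simp only [mem_inter, mem_filter, hb.1, true_and]
          omega
        have h7' := card_le_card h7
        have h8' := card_le_card h8
        rcases lt_or_ge x (l - m + y) with h | h
        · have := gap A x (l - m + y) l hA h
          omega
        · have h9 : A ⊆ {a ∈ A | 0 ≤ a ∧ a ≤ x} ∪ {a ∈ A | l - m + y ≤ a ∧ a ≤ l} := by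
            intro b hb
            have := hA b hb
            simp only [mem_union, mem_filter, hb, true_and]
            omega
          have h9' := (card_le_card h9).trans (card_union_le _ _)
          omega
      · push Not at hmid
        obtain ⟨z, hz1, hz2, hz⟩ := hmid
        by_cases hzz : z ∈ A + C
        · exact ih x z hx (hz hzz) (by omega) hxl hz2 (by push_cast at hn; omega)
        · exact ih z y hzz hy hy0 (by omega) hz1 (by push_cast at hn; omega)
  set X : Finset ℤ := {x ∈ Icc (-1) l | x ∉ A + C} with hX
  set Y : Finset ℤ := {y ∈ Icc 0 (m + 1) | y + l ∉ A + C} with hY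
  have hXne : X.Nonempty := ⟨-1, by
    simp only [hX, mem_filter, mem_Icc]
    exact ⟨by omega, fun h => by have := hrange _ h; omega⟩⟩
  have hYne : Y.Nonempty := ⟨m + 1, by
    simp only [hY, mem_filter, mem_Icc]
    exact ⟨by omega, fun h => by have := hrange _ h; omega⟩⟩
  obtain ⟨x, hxX, hxmax⟩ := X.exists_max_image id hXne
  obtain ⟨y, hyY, hymin⟩ := Y.exists_min_image id hYne
  simp only [id] at hxmax hymin
  obtain ⟨hx1, hx2⟩ := mem_filter.1 hxX
  obtain ⟨hy1, hy2⟩ := mem_filter.1 hyY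
  rw [mem_Icc] at hx1 hy1
  have hxy : x < y := by
    rcases lt_trichotomy x y with h | h | h
    · exact h
    · subst h
      rcases hcov x hy1.1 hx1.2 with h1 | h1
      · exact absurd h1 hx2
      · exact absurd h1 hy2
    · exact (nocross (x - y).toNat x y hx2 hy2 hy1.1 hx1.2 h (by omega)).elim
  refine ⟨x + 1, fun z hz1 hz2 => ?_⟩
  have h1 := key1 x y hx2 hy2 hx1.1 hy1.2
  have h2 := gap C x y m hC hxy
  have h3 := gap A x (l - m + y) l hA (by omega)
  have hzy : z < y + l := by omega
  by_contra hzn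
  rcases le_or_gt z l with h | h
  · have := hxmax z (mem_filter.2 ⟨mem_Icc.2 ⟨by omega, h⟩, hzn⟩)
    omega
  · have := hymin (z - l) (mem_filter.2 ⟨mem_Icc.2 ⟨by omega, by omega⟩, by simpa using hzn⟩)
    omega

/-! ### Kneser's theorem -/

section Kneser
variable {G : Type*} [AddCommGroup G] [Fintype G]

open Classical in
/-- The elements of a subgroup of a finite group, as a `Finset`. -/
noncomputable def sg (H : AddSubgroup G) : Finset G := {x | x ∈ H}

lemma mem_sg {H : AddSubgroup G} {x : G} : x ∈ sg H ↔ x ∈ H := by simp [sg]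

lemma sg_card_pos (H : AddSubgroup G) : 0 < #(sg H) :=
  card_pos.2 ⟨0, mem_sg.2 H.zero_mem⟩

variable [DecidableEq G]

/-- Iterated Dyson transforms. Replacing `(A, B)` by `(A ∪ (B + e), B ∩ (A - e))` keeps `|A| + |B|` and
shrinks `A + B`; when no `e ∈ A` makes `B` smaller, `A` is periodic modulo the subgroup generated
by `B`. -/
lemma etransform_aux (n : ℕ) : ∀ A B : Finset G, #B = n → 0 ∈ A → 0 ∈ B →
    ∃ (C : Finset G) (H : AddSubgroup G), C ⊆ A + B ∧ 0 ∈ C ∧ (∀ x ∈ C, ∀ h ∈ H, x + h ∈ C) ∧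
      #A + #B ≤ #C + #(sg H) := by
  induction n using Nat.strong_induction_on with
  | _ n ih =>
    intro A B hn hA hB
    by_cases hstab : ∀ e ∈ A, ∀ b ∈ B, b + e ∈ A
    · refine ⟨A, AddSubgroup.closure (B : Set G), ?_, hA, ?_, ?_⟩
      · intro a ha
        simpa using add_mem_add ha hB
      · have hB' : ∀ b ∈ B, A.image (· + b) = A := by
          intro b hb
          apply eq_of_subset_of_card_le
          · intro z hz
            obtain ⟨e, he, rfl⟩ := mem_image.1 hz
            simpa [add_comm] using hstab e he b hb
          · rw [card_image_of_injective _ (add_left_injective b)]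
        have hcl : ∀ h ∈ AddSubgroup.closure (B : Set G), ∀ x, x + h ∈ A ↔ x ∈ A := by
          intro h hh
          induction hh using AddSubgroup.closure_induction with
          | mem b hb =>
            intro x
            constructor
            · intro hx
              rw [← hB' b hb] at hx
              obtain ⟨e, he, hee⟩ := mem_image.1 hx
              rwa [← add_right_cancel hee]
            · intro hx
              simpa [add_comm] using hstab x hx b hb
          | zero => simp
          | add u v _ _ hu hv => intro x; rw [← add_assoc, hv, hu]
          | neg u _ hu => intro x; rw [← hu (x + -u)]; simp
        exact fun x hx h hh => (hcl h hh x).2 hx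
      · gcongr
        intro b hb
        exact mem_sg.2 (AddSubgroup.subset_closure hb)
    · push Not at hstab
      obtain ⟨e, he, b, hb, hbe⟩ := hstab
      set B' : Finset G := {b ∈ B | b + e ∈ A} with hB'
      set A' : Finset G := A ∪ B.image (· + e) with hA'
      have hlt : #B' < n := by
        rw [← hn]
        apply card_lt_card
        refine ⟨filter_subset _ _, fun h => hbe ?_⟩
        exact (mem_filter.1 (h hb)).2
      have hsum : #A + #B = #A' + #B' := by
        have h1 := card_union_add_card_inter A (B.image (· + e))
        have h2 : A ∩ B.image (· + e) = B'.image (· + e) := by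
          ext z
          simp only [mem_inter, mem_image, hB', mem_filter]
          constructor
          · rintro ⟨hz, c, hc, rfl⟩
            exact ⟨c, ⟨hc, hz⟩, rfl⟩
          · rintro ⟨c, ⟨hc, hz⟩, rfl⟩
            exact ⟨hz, c, hc, rfl⟩
        rw [h2, card_image_of_injective _ (add_left_injective e),
          card_image_of_injective _ (add_left_injective e), ← hA'] at h1
        omega
      obtain ⟨C, H, hC, h0, hH, hcard⟩ := ih _ hlt A' B' rfl (mem_union_left _ hA)
        (mem_filter.2 ⟨hB, by simpa using he⟩)
      refine ⟨C, H, hC.trans ?_, h0, hH, by omega⟩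
      intro z hz
      obtain ⟨x, hx, y, hy, rfl⟩ := mem_add.1 hz
      obtain ⟨hy1, hy2⟩ := mem_filter.1 hy
      rcases mem_union.1 hx with hx | hx
      · exact add_mem_add hx hy1
      · obtain ⟨c, hc, rfl⟩ := mem_image.1 hx
        exact mem_add.2 ⟨y + e, hy2, c, hc, by abel⟩

/-- Every `c ∈ A + B` lies in a periodic part `C` of `A + B` satisfying the bound in Kneser's
theorem. -/
lemma etransform (A B : Finset G) (c : G) (hc : c ∈ A + B) :
    ∃ (C : Finset G) (H : AddSubgroup G), C ⊆ A + B ∧ c ∈ C ∧ (∀ x ∈ C, ∀ h ∈ H, x + h ∈ C) ∧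
      #A + #B ≤ #C + #(sg H) := by
  obtain ⟨a, ha, b, hb, rfl⟩ := mem_add.1 hc
  obtain ⟨C, H, h1, h2, h3, h4⟩ := etransform_aux _ (A.image (· - a)) (B.image (· - b)) rfl
    (mem_image.2 ⟨a, ha, sub_self a⟩) (mem_image.2 ⟨b, hb, sub_self b⟩)
  rw [card_image_of_injective _ sub_left_injective,
    card_image_of_injective _ sub_left_injective] at h4
  refine ⟨C.image (· + (a + b)), H, ?_, ?_, ?_, ?_⟩
  · intro z hz
    obtain ⟨w, hw, rfl⟩ := mem_image.1 hz
    obtain ⟨x, hx, y, hy, rfl⟩ := mem_add.1 (h1 hw)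
    obtain ⟨x', hx', rfl⟩ := mem_image.1 hx
    obtain ⟨y', hy', rfl⟩ := mem_image.1 hy
    exact mem_add.2 ⟨x', hx', y', hy', by abel⟩
  · exact mem_image.2 ⟨0, h2, zero_add _⟩
  · intro z hz h hh
    obtain ⟨w, hw, rfl⟩ := mem_image.1 hz
    exact mem_image.2 ⟨w + h, h3 w hw h hh, by abel⟩
  · rwa [card_image_of_injective _ (add_left_injective _)]

/-- The map `(k, h) ↦ x + k + h` sends `S × T` into `C₁ \ C₂`, and each of its fibres injects into
`H₁ ⊓ H₂`. -/
lemma grid_count (C₁ C₂ : Finset G) (H₁ H₂ : AddSubgroup G)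
    (h₁ : ∀ x ∈ C₁, ∀ h ∈ H₁, x + h ∈ C₁) (h₂ : ∀ x ∈ C₂, ∀ h ∈ H₂, x + h ∈ C₂)
    (x : G) (S T : Finset G) (hS : ∀ k ∈ S, k ∈ H₂ ∧ x + k ∈ C₁)
    (hT : ∀ h ∈ T, h ∈ H₁ ∧ x + h ∉ C₂) :
    #S * #T ≤ #(C₁ \ C₂) * #(sg (H₁ ⊓ H₂)) := by
  rw [← card_product, mul_comm]
  apply card_le_mul_card_image_of_maps_to (f := fun q : G × G => x + q.1 + q.2)
  · rintro ⟨k, h⟩ hq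
    obtain ⟨hk, hh⟩ := mem_product.1 hq
    refine mem_sdiff.2 ⟨h₁ _ (hS k hk).2 h (hT h hh).1, fun hcon => (hT h hh).2 ?_⟩
    have := h₂ _ hcon (-k) (H₂.neg_mem (hS k hk).1)
    simpa [add_assoc, add_comm, add_left_comm] using this
  · intro z _
    rcases eq_empty_or_nonempty {q ∈ S ×ˢ T | x + q.1 + q.2 = z} with he | ⟨q₀, hq₀⟩
    · simp [he]
    apply card_le_card_of_injOn (fun q => q.1 - q₀.1)
    · intro q hq
      simp only [coe_filter, mem_product, Set.mem_ofPred_eq, mem_filter] at hq hq₀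
      refine mem_sg.2 ⟨?_, H₂.sub_mem (hS _ hq.1.1).1 (hS _ hq₀.1.1).1⟩
      have : q.1 - q₀.1 = q₀.2 - q.2 := by
        have := hq.2.trans hq₀.2.symm
        rw [add_assoc, add_assoc, add_right_inj] at this
        rw [sub_eq_sub_iff_add_eq_add, this, add_comm]
      change q.1 - q₀.1 ∈ H₁
      rw [this]
      exact H₁.sub_mem (hT _ hq₀.1.2).1 (hT _ hq.1.2).1
    · intro q hq q' hq' h
      simp only [coe_filter, mem_product, Set.mem_ofPred_eq] at hq hq'
      have h1 : q.1 = q'.1 := sub_left_injective h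
      have h2 := hq.2.trans hq'.2.symm
      rw [h1] at h2
      exact Prod.ext h1 (add_left_cancel h2)

lemma sg_inf_le {H K : AddSubgroup G} {S : Finset G} (y : G) (hy : ∀ h ∈ H ⊓ K, y + h ∈ S) :
    #(sg (H ⊓ K)) ≤ #S := by
  rw [← card_image_of_injective _ (add_right_injective y)]
  apply card_le_card
  intro z hz
  obtain ⟨h, hh, rfl⟩ := mem_image.1 hz
  exact hy h (mem_sg.1 hh)

/-- The contribution of one `H₁ + H₂`-coset, viewed as a rectangular grid of
`H₁ ⊓ H₂`-cosets in which `C₁` is a union of rows and `C₂` a union of columns. -/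
lemma grid_coset (C₁ C₂ : Finset G) (H₁ H₂ : AddSubgroup G)
    (h₁ : ∀ x ∈ C₁, ∀ h ∈ H₁, x + h ∈ C₁) (h₂ : ∀ x ∈ C₂, ∀ h ∈ H₂, x + h ∈ C₂)
    (x : G) (hx₁ : x ∈ C₁) (hx₂ : x ∉ C₂) :
    #(sg H₁) ≤ #(C₁ \ C₂) ∨ #(sg H₂) ≤ #(C₁ \ C₂) + #(sg (H₁ ⊓ H₂)) ∨
      #(sg H₁) ≤ #(C₂ \ C₁) + #(sg (H₁ ⊓ H₂)) := by
  have h₂' : ∀ y ∉ C₂, ∀ h ∈ H₂, y + h ∉ C₂ := fun y hy h hh hc => hy (by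
    simpa using h₂ _ hc (-h) (H₂.neg_mem hh))
  have h₁' : ∀ y ∉ C₁, ∀ h ∈ H₁, y + h ∉ C₁ := fun y hy h hh hc => hy (by
    simpa using h₁ _ hc (-h) (H₁.neg_mem hh))
  set S : Finset G := {k ∈ sg H₂ | x + k ∈ C₁} with hS
  set S' : Finset G := {k ∈ sg H₂ | x + k ∉ C₁} with hS'
  set T' : Finset G := {h ∈ sg H₁ | x + h ∈ C₂} with hT'
  set T : Finset G := {h ∈ sg H₁ | x + h ∉ C₂} with hT
  have hSS : #S + #S' = #(sg H₂) := card_filter_add_card_filter_not _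
  have hTT : #T' + #T = #(sg H₁) := card_filter_add_card_filter_not _
  have g1 := grid_count C₁ C₂ H₁ H₂ h₁ h₂ x S T
    (by intro k hk; simpa [hS, mem_sg] using hk) (by intro k hk; simpa [hT, mem_sg] using hk)
  have g2 := grid_count C₂ C₁ H₂ H₁ h₂ h₁ x T' S'
    (by intro k hk; simpa [hT', mem_sg] using hk) (by intro k hk; simpa [hS', mem_sg] using hk)
  rw [inf_comm] at g2
  have hs : #(sg (H₁ ⊓ H₂)) ≤ #S := sg_inf_le 0 (by
    intro h hh
    simp only [hS, mem_filter, mem_sg, zero_add]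
    exact ⟨hh.2, h₁ x hx₁ h hh.1⟩)
  have ht : #(sg (H₁ ⊓ H₂)) ≤ #T := sg_inf_le 0 (by
    intro h hh
    simp only [hT, mem_filter, mem_sg, zero_add]
    exact ⟨hh.1, h₂' x hx₂ h hh.2⟩)
  have hpos := sg_card_pos (H₁ ⊓ H₂)
  rcases T'.eq_empty_or_nonempty with he | ⟨c, hc⟩
  · left
    rw [he, card_empty, zero_add] at hTT
    rw [← hTT]
    apply Nat.le_of_mul_le_mul_left _ hpos
    calc _ ≤ #S * #T := Nat.mul_le_mul_right _ hs
      _ ≤ _ := by rw [mul_comm (#(sg _))]; exact g1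
  rcases S'.eq_empty_or_nonempty with he | ⟨u, hu⟩
  · right; left
    rw [he, card_empty, add_zero] at hSS
    rw [← hSS]
    refine le_trans ?_ (Nat.le_add_right _ _)
    apply Nat.le_of_mul_le_mul_left _ hpos
    calc _ ≤ #S * #T := by rw [mul_comm]; exact Nat.mul_le_mul_left _ ht
      _ ≤ _ := by rw [mul_comm (#(sg _))]; exact g1
  have hs' : #(sg (H₁ ⊓ H₂)) ≤ #S' := sg_inf_le u (by
    intro h hh
    simp only [hS', mem_filter, mem_sg] at hu ⊢
    exact ⟨H₂.add_mem hu.1 hh.2, by rw [← add_assoc]; exact h₁' _ hu.2 h hh.1⟩)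
  have ht' : #(sg (H₁ ⊓ H₂)) ≤ #T' := sg_inf_le c (by
    intro h hh
    simp only [hT', mem_filter, mem_sg] at hc ⊢
    exact ⟨H₁.add_mem hc.1 hh.1, by rw [← add_assoc]; exact h₂ _ hc.2 h hh.2⟩)
  right
  by_contra! hcon
  obtain ⟨c1, c2⟩ := hcon
  rw [← hSS] at c1
  rw [← hTT] at c2
  generalize #(sg (H₁ ⊓ H₂)) = L at *
  generalize #(C₁ \ C₂) = D₁ at *
  generalize #(C₂ \ C₁) = D₂ at *
  zify at *
  have e1 : (#S : ℤ) * (#T - L) < L * (#S' - L) := by nlinarith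
  have e2 : (#T' : ℤ) * (#S' - L) < L * (#T - L) := by nlinarith
  nlinarith

/-- The bound `N ≤ |C| + |H|` for an `H`-periodic set `C` passes to the union of two such sets. -/
lemma kneser_union (C₁ C₂ : Finset G) (H₁ H₂ : AddSubgroup G)
    (h₁ : ∀ x ∈ C₁, ∀ h ∈ H₁, x + h ∈ C₁) (h₂ : ∀ x ∈ C₂, ∀ h ∈ H₂, x + h ∈ C₂) (N : ℕ)
    (hN₁ : N ≤ #C₁ + #(sg H₁)) (hN₂ : N ≤ #C₂ + #(sg H₂)) :
    ∃ H : AddSubgroup G, (∀ x ∈ C₁ ∪ C₂, ∀ h ∈ H, x + h ∈ C₁ ∪ C₂) ∧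
      N ≤ #(C₁ ∪ C₂) + #(sg H) := by
  by_cases h12 : C₁ ⊆ C₂
  · rw [union_eq_right.2 h12]
    exact ⟨H₂, h₂, hN₂⟩
  by_cases h21 : C₂ ⊆ C₁
  · rw [union_eq_left.2 h21]
    exact ⟨H₁, h₁, hN₁⟩
  obtain ⟨x, hx₁, hx₂⟩ := not_subset.1 h12
  obtain ⟨y, hy₁, hy₂⟩ := not_subset.1 h21
  refine ⟨H₁ ⊓ H₂, ?_, ?_⟩
  · intro z hz h hh
    rcases mem_union.1 hz with hz | hz
    · exact mem_union_left _ (h₁ z hz h hh.1)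
    · exact mem_union_right _ (h₂ z hz h hh.2)
  have g1 := grid_coset C₁ C₂ H₁ H₂ h₁ h₂ x hx₁ hx₂
  have g2 := grid_coset C₂ C₁ H₂ H₁ h₂ h₁ y hy₁ hy₂
  rw [inf_comm] at g2
  have e1 := card_sdiff_add_card C₁ C₂
  have e2 := card_sdiff_add_card C₂ C₁
  rw [union_comm] at e2
  omega

/-- **Kneser's theorem**, existential form: `A + B` is periodic modulo some subgroup `H` with
`|A + B| ≥ |A| + |B| - |H|`. -/
lemma kneser_weak (A B : Finset G) (hA : A.Nonempty) (hB : B.Nonempty) :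
    ∃ H : AddSubgroup G, (∀ x ∈ A + B, ∀ h ∈ H, x + h ∈ A + B) ∧
      #A + #B ≤ #(A + B) + #(sg H) := by
  have main : ∀ F : Finset G, F.Nonempty → F ⊆ A + B →
      ∃ (C : Finset G) (H : AddSubgroup G), F ⊆ C ∧ C ⊆ A + B ∧
        (∀ x ∈ C, ∀ h ∈ H, x + h ∈ C) ∧ #A + #B ≤ #C + #(sg H) := by
    intro F hF
    induction hF using Finset.Nonempty.cons_induction with
    | singleton c =>
      intro hc
      obtain ⟨C, H, h1, h2, h3, h4⟩ := etransform A B c (hc (mem_singleton_self c))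
      exact ⟨C, H, singleton_subset_iff.2 h2, h1, h3, h4⟩
    | cons c F hcF hF ih =>
      intro hsub
      obtain ⟨C, H, h1, h2, h3, h4⟩ := etransform A B c (hsub (mem_cons_self c F))
      obtain ⟨C', H', h1', h2', h3', h4'⟩ := ih ((subset_cons hcF).trans hsub)
      obtain ⟨K, hK, hK'⟩ := kneser_union C C' H H' h3 h3' _ h4 h4'
      refine ⟨C ∪ C', K, ?_, union_subset h1 h2', hK, hK'⟩
      intro z hz
      rcases mem_cons.1 hz with rfl | hz
      · exact mem_union_left _ h2
      · exact mem_union_right _ (h1' hz)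
  obtain ⟨C, H, h1, h2, h3, h4⟩ := main (A + B) (hA.add hB) Subset.rfl
  obtain rfl : A + B = C := h1.antisymm h2
  exact ⟨H, h3, h4⟩

/-- **Kneser's theorem** for a doubling: `A + A` is periodic modulo some subgroup `H` with
`|A + A| ≥ 2 |A + H| - |H|`. -/
lemma kneser_double (A : Finset G) (hA : A.Nonempty) :
    ∃ H : AddSubgroup G, (∀ x ∈ A + A, ∀ h ∈ H, x + h ∈ A + A) ∧
      2 * #(A + sg H) ≤ #(A + A) + #(sg H) := by
  -- the full stabilizer of `A + A`
  let H : AddSubgroup G :=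
    { carrier := {h | ∀ x, x + h ∈ A + A ↔ x ∈ A + A}
      zero_mem' := by simp
      add_mem' := by
        intro u v hu hv x
        rw [← add_assoc, hv, hu]
      neg_mem' := by
        intro u hu x
        rw [← hu (x + -u)]
        simp }
  have hH : ∀ x ∈ A + A, ∀ h ∈ H, x + h ∈ A + A := fun x hx h hh => (hh x).2 hx
  have hne : (sg H).Nonempty := ⟨0, mem_sg.2 H.zero_mem⟩
  have hAH : (A + sg H) + (A + sg H) = A + A := by
    ext z
    constructor
    · intro hz
      obtain ⟨u, hu, v, hv, rfl⟩ := mem_add.1 hz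
      obtain ⟨a, ha, h, hh, rfl⟩ := mem_add.1 hu
      obtain ⟨b, hb, k, hk, rfl⟩ := mem_add.1 hv
      rw [add_add_add_comm]
      exact hH _ (add_mem_add ha hb) _ (H.add_mem (mem_sg.1 hh) (mem_sg.1 hk))
    · intro hz
      obtain ⟨a, ha, b, hb, rfl⟩ := mem_add.1 hz
      exact add_mem_add (mem_add.2 ⟨a, ha, 0, mem_sg.2 H.zero_mem, add_zero a⟩)
        (mem_add.2 ⟨b, hb, 0, mem_sg.2 H.zero_mem, add_zero b⟩)
  obtain ⟨K, hK, hK'⟩ := kneser_weak (A + sg H) (A + sg H) (hA.add hne) (hA.add hne)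
  rw [hAH] at hK hK'
  have hKH : K ≤ H := by
    intro k hk x
    refine ⟨fun hx => ?_, fun hx => hK x hx k hk⟩
    simpa using hK _ hx (-k) (K.neg_mem hk)
  have : #(sg K) ≤ #(sg H) := card_le_card fun x hx => mem_sg.2 (hKH (mem_sg.1 hx))
  exact ⟨H, hH, by omega⟩

end Kneser

/-! ### Freiman's `3k - 4` theorem -/

lemma fiber_card {β : Type*} [DecidableEq β] (π : ℤ → β) (S : Finset ℤ) (F : Finset β)
    (hF : ∀ x ∈ F, ∃ s ∈ S, π s = x) : #F ≤ #{s ∈ S | π s ∈ F} := by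
  refine (card_le_card ?_).trans (card_image_le (f := π))
  intro x hx
  obtain ⟨s, hs, rfl⟩ := hF x hx
  exact mem_image.2 ⟨s, mem_filter.2 ⟨hs, hx⟩, rfl⟩

/-- **Freiman's `3k - 4` theorem** for a normalized set of integers: if `0, l ∈ A ⊆ [0, l]`, the
elements of `A` have no common factor and `|A + A| ≤ 3 |A| - 4`, then `|A + A| ≥ l + |A|`. Let `B` be
the reduction of `A` modulo `l`, so that at least `2 |A| - 1` elements of `A + A` lie over `B`, and let
`H` be the subgroup of Kneser's theorem for `B + B`. If `B + B ⊆ B + H`, then `B + H` is a subgroup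
containing `B`, hence everything, and each residue outside `B` contributes one more element.
Otherwise some `H`-coset of `B + B` misses `B + H`; the trivial lower bound for the sums over that
coset, together with the count over the remaining residues, contradicts `|A + A| ≤ 3 |A| - 4`. -/
lemma freiman (A : Finset ℤ) (l : ℕ) (hl : 1 ≤ l) (hA : ∀ a ∈ A, 0 ≤ a ∧ a ≤ l)
    (h0 : 0 ∈ A) (hlA : (l : ℤ) ∈ A) (hgcd : ∀ d : ℕ, (∀ a ∈ A, (d : ℤ) ∣ a) → d = 1)
    (hS : #(A + A) + 4 ≤ 3 * #A) : l + #A ≤ #(A + A) := by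
  have : NeZero l := ⟨by omega⟩
  set π : ℤ → ZMod l := fun z => (z : ZMod l) with hπ
  have hπadd : ∀ x y, π (x + y) = π x + π y := fun x y => Int.cast_add x y
  have hπ0 : π 0 = 0 := Int.cast_zero
  have hπl : π l = 0 := by simp [hπ]
  set B : Finset (ZMod l) := A.image π with hB
  set S : Finset ℤ := A + A with hSdef
  have hBB : ∀ x ∈ B + B, ∃ s ∈ S, π s = x := by
    intro x hx
    obtain ⟨u, hu, v, hv, rfl⟩ := mem_add.1 hx
    obtain ⟨a, ha, rfl⟩ := mem_image.1 hu
    obtain ⟨b, hb, rfl⟩ := mem_image.1 hv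
    exact ⟨a + b, add_mem_add ha hb, hπadd a b⟩
  have hBcard : #B + 1 = #A := by
    have h1 : B = (A.erase (l : ℤ)).image π := by
      apply subset_antisymm
      · intro x hx
        obtain ⟨a, ha, rfl⟩ := mem_image.1 hx
        by_cases hal : a = l
        · exact mem_image.2 ⟨0, mem_erase.2 ⟨by omega, h0⟩, by rw [hal, hπl, hπ0]⟩
        · exact mem_image.2 ⟨a, mem_erase.2 ⟨hal, ha⟩, rfl⟩
      · exact image_subset_image (erase_subset _ _)
    rw [h1, card_image_of_injOn, card_erase_add_one hlA]
    intro a ha b hb hab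
    have ha' := mem_erase.1 (mem_coe.1 ha)
    have hb' := mem_erase.1 (mem_coe.1 hb)
    have h2 := hA a ha'.2
    have h3 := hA b hb'.2
    have h4 := (ZMod.intCast_eq_intCast_iff' a b l).1 hab
    rwa [Int.emod_eq_of_lt h2.1 (by omega), Int.emod_eq_of_lt h3.1 (by omega)] at h4
  -- over the image of `A` itself lie both `A` and `A + l`
  have hnB : 2 * #A ≤ #{s ∈ S | π s ∈ B} + 1 := by
    have hinj : Function.Injective (fun a : ℤ => a + l) := add_left_injective _
    have h1 : A ∪ A.image (fun a => a + l) ⊆ {s ∈ S | π s ∈ B} := by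
      intro s hs
      rcases mem_union.1 hs with hs | hs
      · exact mem_filter.2 ⟨by simpa using add_mem_add hs h0, mem_image_of_mem _ hs⟩
      · obtain ⟨a, ha, rfl⟩ := mem_image.1 hs
        refine mem_filter.2 ⟨add_mem_add ha hlA, ?_⟩
        rw [hπadd, hπl, add_zero]
        exact mem_image_of_mem _ ha
    have h2 : A ∩ A.image (fun a => a + l) ⊆ {(l : ℤ)} := by
      intro s hs
      obtain ⟨hs1, hs2⟩ := mem_inter.1 hs
      obtain ⟨a, ha, rfl⟩ := mem_image.1 hs2
      have := hA _ hs1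
      have := hA a ha
      simp only [mem_singleton]
      omega
    have h3 := card_union_add_card_inter A (A.image (fun a => a + l))
    rw [card_image_of_injective _ hinj] at h3
    have h4 := card_le_card h1
    have h5 := card_le_card h2
    rw [card_singleton] at h5
    omega
  have h0B : (0 : ZMod l) ∈ B := by rw [← hπ0]; exact mem_image_of_mem _ h0
  obtain ⟨H, hH, hK⟩ := kneser_double B ⟨0, h0B⟩
  set Q := B + sg H with hQ
  have hBQ : B ⊆ Q := fun x hx => mem_add.2 ⟨x, hx, 0, mem_sg.2 H.zero_mem, add_zero x⟩
  have hQH : ∀ x ∈ Q, ∀ h ∈ H, x + h ∈ Q := by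
    intro x hx h hh
    obtain ⟨b, hb, k, hk, rfl⟩ := mem_add.1 hx
    rw [add_assoc]
    exact add_mem_add hb (mem_sg.2 (H.add_mem (mem_sg.1 hk) hh))
  have hBS : B ⊆ B + B := fun x hx => mem_add.2 ⟨x, hx, 0, h0B, add_zero x⟩
  have hQS : Q ⊆ B + B := by
    intro x hx
    obtain ⟨b, hb, k, hk, rfl⟩ := mem_add.1 hx
    exact hH b (hBS hb) k (mem_sg.1 hk)
  by_cases hcase : B + B ⊆ Q
  · -- then `Q` is a subgroup containing the generating set `B`
    have hQadd : ∀ x ∈ Q, ∀ y ∈ Q, x + y ∈ Q := by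
      intro x hx y hy
      obtain ⟨b, hb, k, hk, rfl⟩ := mem_add.1 hx
      obtain ⟨b', hb', k', hk', rfl⟩ := mem_add.1 hy
      rw [add_add_add_comm]
      exact hQH _ (hcase (add_mem_add hb hb')) _ (H.add_mem (mem_sg.1 hk) (mem_sg.1 hk'))
    have hQsmul : ∀ x ∈ Q, ∀ n : ℕ, n • x ∈ Q := by
      intro x hx n
      induction n with
      | zero => simpa using hBQ h0B
      | succ n ih => rw [succ_nsmul]; exact hQadd _ ih _ hx
    let K : AddSubgroup ℤ :=
      { carrier := {z | π z ∈ Q}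
        zero_mem' := by change π 0 ∈ Q; rw [hπ0]; exact hBQ h0B
        add_mem' := by
          intro a b ha hb
          change π (a + b) ∈ Q
          rw [hπadd]
          exact hQadd _ ha _ hb
        neg_mem' := by
          intro a ha
          change π (-a) ∈ Q
          have := hQsmul _ ha (l - 1)
          have h2 : (l - 1) • π a = π (-a) := by
            rw [nsmul_eq_mul, Nat.cast_sub hl]
            simp [hπ]
          rwa [h2] at this }
    obtain ⟨d, hd⟩ := Int.subgroup_cyclic K
    have hAK : ∀ a ∈ A, a ∈ K := fun a ha => hBQ (mem_image_of_mem _ ha)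
    rw [← AddSubgroup.zmultiples_eq_closure] at hd
    have hd1 : d.natAbs = 1 := by
      apply hgcd
      intro a ha
      have := hAK a ha
      rw [hd, Int.mem_zmultiples_iff] at this
      exact Int.natAbs_dvd.2 this
    have hall : ∀ x : ZMod l, x ∈ Q := by
      intro x
      obtain ⟨z, rfl⟩ := ZMod.intCast_surjective x
      have : z ∈ K := by
        rw [hd, Int.mem_zmultiples_iff]
        exact Int.natAbs_dvd.1 (by rw [hd1]; simp)
      exact this
    have h1 := fiber_card π S (univ \ B) (fun x _ => hBB x (hQS (hall x)))
    have h2 : #{s ∈ S | π s ∈ B} + #{s ∈ S | π s ∈ univ \ B} ≤ #S := by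
      rw [← card_union_of_disjoint]
      · exact card_le_card (union_subset (filter_subset _ _) (filter_subset _ _))
      · rw [disjoint_left]
        intro s hs hs'
        exact (mem_sdiff.1 (mem_filter.1 hs').2).2 (mem_filter.1 hs).2
    have h3 := card_sdiff_add_card_eq_card (subset_univ B)
    rw [card_univ, ZMod.card] at h3
    omega
  · exfalso
    classical
    obtain ⟨c, hc, hcQ⟩ := not_subset.1 hcase
    obtain ⟨i, hi, j, hj, rfl⟩ := mem_add.1 hc
    set h := #(sg H) with hh
    have hρ := card_sdiff_add_card_eq_card hBQ
    -- a coset of `H` meeting `B` has at most `#(Q \ B)` points outside `B`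
    have hpart : ∀ i ∈ B, h ≤ #{a ∈ A | π a - i ∈ H} + #(Q \ B) := by
      intro i hi
      have h1 : (sg H).image (fun k => i + k) ⊆
          ({a ∈ A | π a - i ∈ H}.image π) ∪ (Q \ B) := by
        intro x hx
        obtain ⟨k, hk, rfl⟩ := mem_image.1 hx
        have hk := mem_sg.1 hk
        by_cases hB' : i + k ∈ B
        · obtain ⟨a, ha, hak⟩ := mem_image.1 hB'
          refine mem_union_left _ (mem_image.2 ⟨a, mem_filter.2 ⟨ha, ?_⟩, hak⟩)
          rwa [hak, add_sub_cancel_left]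
        · exact mem_union_right _ (mem_sdiff.2 ⟨hQH _ (hBQ hi) _ hk, hB'⟩)
      have h2 := (card_le_card h1).trans (card_union_le _ _)
      rw [card_image_of_injective _ (add_right_injective i)] at h2
      have h3 : #({a ∈ A | π a - i ∈ H}.image π) ≤ #{a ∈ A | π a - i ∈ H} := card_image_le
      omega
    have hpi := hpart i hi
    have hpj := hpart j hj
    have hne : ∀ i ∈ B, {a ∈ A | π a - i ∈ H}.Nonempty := by
      intro i hi
      obtain ⟨a, ha, rfl⟩ := mem_image.1 hi
      exact ⟨a, mem_filter.2 ⟨ha, by simp⟩⟩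
    have hcd := cauchy_davenport_add_of_linearOrder_isCancelAdd (hne i hi) (hne j hj)
    have hsub : {a ∈ A | π a - i ∈ H} + {a ∈ A | π a - j ∈ H} ⊆
        {s ∈ S | π s - (i + j) ∈ H} := by
      intro x hx
      obtain ⟨a, ha, b, hb, rfl⟩ := mem_add.1 hx
      have ha := mem_filter.1 ha
      have hb := mem_filter.1 hb
      refine mem_filter.2 ⟨add_mem_add ha.1 hb.1, ?_⟩
      rw [hπadd, add_sub_add_comm]
      exact H.add_mem ha.2 hb.2
    have hcH := card_le_card hsub
    -- the remaining residues
    set R : Finset (ZMod l) := {x ∈ B + B | x ∉ Q ∧ x - (i + j) ∉ H} with hR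
    have hRcard : #(B + B) ≤ #R + #Q + h := by
      have h1 : B + B ⊆ (R ∪ Q) ∪ (sg H).image (fun k => (i + j) + k) := by
        intro x hx
        by_cases h1 : x ∈ Q
        · exact mem_union_left _ (mem_union_right _ h1)
        by_cases h2 : x - (i + j) ∈ H
        · exact mem_union_right _ (mem_image.2 ⟨_, mem_sg.2 h2, by simp⟩)
        · exact mem_union_left _ (mem_union_left _ (mem_filter.2 ⟨hx, h1, h2⟩))
      have h2 := (card_le_card h1).trans (card_union_le _ _)
      rw [card_image_of_injective _ (add_right_injective (i + j))] at h2
      have h3 := card_union_le R Q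
      omega
    have hn1 := fiber_card π S (Q \ B) (fun x hx => hBB x (hQS (mem_sdiff.1 hx).1))
    have hn2 := fiber_card π S R (fun x hx => hBB x (mem_filter.1 hx).1)
    have hcos : ∀ s, π s - (i + j) ∈ H → π s ∉ Q := by
      intro s hs hsQ
      apply hcQ
      have := hQH _ hsQ _ (H.neg_mem hs)
      simpa using this
    have htot : #{s ∈ S | π s ∈ B} + #{s ∈ S | π s ∈ Q \ B} + #{s ∈ S | π s - (i + j) ∈ H}
        + #{s ∈ S | π s ∈ R} ≤ #S := by
      rw [← card_union_of_disjoint, ← card_union_of_disjoint, ← card_union_of_disjoint]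
      · exact card_le_card (union_subset (union_subset (union_subset (filter_subset _ _)
          (filter_subset _ _)) (filter_subset _ _)) (filter_subset _ _))
      · rw [disjoint_left]
        intro s hs hs'
        have hs' := (mem_filter.1 (mem_filter.1 hs').2).2
        simp only [mem_union, mem_filter, mem_sdiff] at hs
        rcases hs with (hs | hs) | hs
        · exact hs'.1 (hBQ hs.2)
        · exact hs'.1 hs.2.1
        · exact hs'.2 hs.2
      · rw [disjoint_left]
        intro s hs hs'
        have hs' := hcos s (mem_filter.1 hs').2
        simp only [mem_union, mem_filter, mem_sdiff] at hs
        rcases hs with hs | hs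
        · exact hs' (hBQ hs.2)
        · exact hs' hs.2.1
      · rw [disjoint_left]
        intro s hs hs'
        exact (mem_sdiff.1 (mem_filter.1 hs').2).2 (mem_filter.1 hs).2
    omega

/-! ### Fourier bias and half-intervals -/

/-- The `p`-th roots of unity in a closed half-circle correspond to residues lying among
`(p + 1) / 2` consecutive ones. -/
lemma half_circle {p : ℕ} [NeZero p] (hodd : Odd p) (γ : ℝ) : ∃ j : ZMod p, ∀ b : ZMod p,
    0 ≤ Real.cos (2 * Real.pi * b.val / p - γ) → ∃ i : ℕ, i ≤ (p - 1) / 2 ∧ b = j + i := by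
  have hp0 : (0 : ℝ) < p := by exact_mod_cast Nat.pos_of_ne_zero (NeZero.ne p)
  have hpi := Real.pi_pos
  -- the half-circle is the set of `b` with `b - p k ∈ [L, L + p / 2]` for some integer `k`
  set L : ℝ := p * (γ / (2 * Real.pi) - 1 / 4) with hL
  refine ⟨(⌈L⌉ : ℤ), fun b hb => ?_⟩
  set y := 2 * Real.pi * b.val / p - γ with hy
  obtain ⟨k, hk1, hk2⟩ : ∃ k : ℤ, y - k * (2 * Real.pi) ≤ Real.pi / 2 ∧
      -(Real.pi / 2) ≤ y - k * (2 * Real.pi) := by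
    refine ⟨toIocDiv Real.two_pi_pos (-Real.pi) y, ?_⟩
    have hmem := sub_toIocDiv_zsmul_mem_Ioc Real.two_pi_pos (-Real.pi) y
    rw [zsmul_eq_mul] at hmem
    set k := toIocDiv Real.two_pi_pos (-Real.pi) y
    have hc : Real.cos (y - k * (2 * Real.pi)) = Real.cos y := Real.cos_sub_int_mul_two_pi y k
    obtain ⟨hm1, hm2⟩ := hmem
    constructor
    · by_contra! h
      have := Real.cos_neg_of_pi_div_two_lt_of_lt h (by linarith)
      linarith
    · by_contra! h
      have := Real.cos_neg_of_pi_div_two_lt_of_lt (x := -(y - k * (2 * Real.pi)))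
        (by linarith) (by linarith)
      rw [Real.cos_neg] at this
      linarith
  have hx : ((b.val : ℝ) - p * k) = p * ((y - k * (2 * Real.pi)) / (2 * Real.pi)
      + γ / (2 * Real.pi)) := by
    rw [hy]; field_simp; ring
  have hlo : L ≤ (b.val : ℝ) - p * k := by
    rw [hx, hL]
    have : -(1 / 4) ≤ (y - k * (2 * Real.pi)) / (2 * Real.pi) := by
      rw [le_div_iff₀ Real.two_pi_pos]; linarith
    exact mul_le_mul_of_nonneg_left (by linarith) hp0.le
  have hhi : (b.val : ℝ) - p * k ≤ L + p / 2 := by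
    rw [hx, hL]
    have : (y - k * (2 * Real.pi)) / (2 * Real.pi) ≤ 1 / 4 := by
      rw [div_le_iff₀ Real.two_pi_pos]; linarith
    have := mul_le_mul_of_nonneg_left (add_le_add_left this (γ / (2 * Real.pi))) hp0.le
    linarith
  have h1 : ⌈L⌉ ≤ (b.val : ℤ) - p * k := Int.ceil_le.2 (by push_cast; exact hlo)
  have h2 : 2 * ((b.val : ℤ) - p * k) ≤ 2 * ⌈L⌉ + p := by
    have := Int.le_ceil L
    have h : (2 * ((b.val : ℝ) - p * k)) ≤ 2 * ⌈L⌉ + p := by linarith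
    exact_mod_cast h
  refine ⟨((b.val : ℤ) - p * k - ⌈L⌉).toNat, ?_, ?_⟩
  · obtain ⟨q, rfl⟩ := hodd
    push_cast at *
    omega
  · have h3 : ((((b.val : ℤ) - p * k - ⌈L⌉).toNat : ℤ) : ZMod p) =
        (((b.val : ℤ) - p * k - ⌈L⌉ : ℤ) : ZMod p) := by
      rw [Int.toNat_of_nonneg (by omega)]
    rw [Int.cast_natCast] at h3
    rw [h3]
    push_cast
    simp

lemma intervalIntegrable_ite {f g : ℝ → ℝ} (hf : Continuous f) (hg : Continuous g) (a b : ℝ) :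
    IntervalIntegrable (fun ψ => if 0 < f ψ then g ψ else 0) MeasureTheory.volume a b := by
  have hm : MeasurableSet {ψ | 0 < f ψ} := (isOpen_lt continuous_const hf).measurableSet
  have h1 : (fun ψ => if 0 < f ψ then g ψ else 0) = Set.indicator {ψ | 0 < f ψ} g := by
    ext ψ
    simp [Set.indicator_apply]
  rw [h1, intervalIntegrable_iff]
  exact ((intervalIntegrable_iff.1 (hg.intervalIntegrable a b)).indicator hm)

/-- Averaging the indicator of the half-circle centred at `ψ` against `cos ψ` recovers `2 cos θ`. -/
lemma integral_half (θ : ℝ) :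
    ∫ ψ in (-(Real.pi / 2))..(3 * Real.pi / 2),
      (if 0 < Real.cos (θ - ψ) then Real.cos ψ else 0) = 2 * Real.cos θ := by
  have hpi := Real.pi_pos
  set h : ℝ → ℝ := fun ψ => if 0 < Real.cos ψ then Real.cos (ψ + θ) else 0 with hh
  have hper : Function.Periodic h (2 * Real.pi) := by
    intro ψ
    simp only [hh, Real.cos_add_two_pi]
    rw [show ψ + 2 * Real.pi + θ = ψ + θ + 2 * Real.pi by ring, Real.cos_add_two_pi]
  have h1 : ∀ ψ, (if 0 < Real.cos (θ - ψ) then Real.cos ψ else 0) = h (ψ - θ) := by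
    intro ψ
    simp only [hh, sub_add_cancel]
    rw [← Real.cos_neg (θ - ψ), neg_sub]
  simp only [h1]
  rw [intervalIntegral.integral_comp_sub_right]
  have h2 := hper.intervalIntegral_add_eq (-(Real.pi / 2) - θ) (-(Real.pi / 2))
  rw [show 3 * Real.pi / 2 - θ = -(Real.pi / 2) - θ + 2 * Real.pi by ring, h2,
    show -(Real.pi / 2) + 2 * Real.pi = 3 * Real.pi / 2 by ring]
  -- `h` is a cosine where `cos ψ > 0` and vanishes on the other half-period
  have hA : ∫ ψ in (-(Real.pi / 2))..(Real.pi / 2), h ψ = 2 * Real.cos θ := by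
    have : ∫ ψ in (-(Real.pi / 2))..(Real.pi / 2), h ψ =
        ∫ ψ in (-(Real.pi / 2))..(Real.pi / 2), Real.cos (ψ + θ) := by
      apply intervalIntegral.integral_congr_Ioo_of_le (by linarith)
      intro ψ hψ
      simp only [hh, if_pos (Real.cos_pos_of_mem_Ioo hψ)]
    rw [this, intervalIntegral.integral_comp_add_right, integral_cos,
      Real.sin_add, Real.sin_add]
    simp
    ring
  have hB : ∫ ψ in (Real.pi / 2)..(3 * Real.pi / 2), h ψ = 0 := by
    have : ∫ ψ in (Real.pi / 2)..(3 * Real.pi / 2), h ψ =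
        ∫ ψ in (Real.pi / 2)..(3 * Real.pi / 2), (0 : ℝ) := by
      apply intervalIntegral.integral_congr
      intro ψ hψ
      rw [Set.uIcc_of_le (by linarith)] at hψ
      have := Real.cos_nonpos_of_pi_div_two_le_of_le hψ.1 (by linarith [hψ.2])
      simp only [hh, if_neg (not_lt.2 this)]
    rw [this]; simp
  have hint : ∀ a b, IntervalIntegrable h MeasureTheory.volume a b := fun a b =>
    intervalIntegrable_ite Real.continuous_cos
    (Real.continuous_cos.comp (continuous_add_const θ)) a b
  rw [← intervalIntegral.integral_add_adjacent_intervals (hint _ (Real.pi / 2)) (hint _ _)]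
  exact (congrArg₂ (· + ·) hA hB).trans (add_zero _)

/-- If every closed half-circle contains at most `M` of the points `θ b`, then every open one contains
at least `|B| - M`, and integrating the two bounds against the positive and negative parts of the
cosine bounds `∑ cos (θ b)`. -/
lemma sum_cos_le {ι : Type*} (B : Finset ι) (θ : ι → ℝ) (M : ℝ)
    (h₁ : ∀ ψ, (#{b ∈ B | 0 ≤ Real.cos (θ b - ψ)} : ℝ) ≤ M) :
    ∑ b ∈ B, Real.cos (θ b) ≤ 2 * M - #B := by
  have hpi := Real.pi_pos
  set N : ℝ → ℝ := fun ψ => ∑ b ∈ B, (if 0 < Real.cos (θ b - ψ) then Real.cos ψ else 0) with hN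
  have hNeq : ∀ ψ, N ψ = #{b ∈ B | 0 < Real.cos (θ b - ψ)} * Real.cos ψ := by
    intro ψ
    simp only [hN]
    rw [← sum_filter, sum_const, nsmul_eq_mul]
  have hint1 : ∀ b ∈ B, ∀ x y, IntervalIntegrable
      (fun ψ => if 0 < Real.cos (θ b - ψ) then Real.cos ψ else 0) MeasureTheory.volume x y :=
    fun b _ x y => intervalIntegrable_ite
      (Real.continuous_cos.comp (continuous_const.sub continuous_id)) Real.continuous_cos x y
  have hint : ∀ x y, IntervalIntegrable N MeasureTheory.volume x y := by
    intro x y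
    have := IntervalIntegrable.sum B (fun b hb => hint1 b hb x y)
    have h2 : N = ∑ b ∈ B, fun ψ => if 0 < Real.cos (θ b - ψ) then Real.cos ψ else 0 := by
      ext ψ
      simp [hN]
    rw [h2]
    exact this
  have htot : ∫ ψ in (-(Real.pi / 2))..(3 * Real.pi / 2), N ψ = 2 * ∑ b ∈ B, Real.cos (θ b) := by
    simp only [hN]
    rw [intervalIntegral.integral_finsetSum (fun b hb => hint1 b hb _ _), mul_sum]
    exact sum_congr rfl fun b _ => integral_half (θ b)
  have hup : ∀ ψ, (#{b ∈ B | 0 < Real.cos (θ b - ψ)} : ℝ) ≤ M := by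
    intro ψ
    refine le_trans ?_ (h₁ ψ)
    exact_mod_cast card_le_card (monotone_filter_right _ fun b _ hb => le_of_lt hb)
  -- the complement of an open half-circle is the opposite closed one
  have hlow : ∀ ψ, (#B : ℝ) - M ≤ #{b ∈ B | 0 < Real.cos (θ b - ψ)} := by
    intro ψ
    have h2 := h₁ (ψ + Real.pi)
    have h3 : #{b ∈ B | 0 < Real.cos (θ b - ψ)} + #{b ∈ B | ¬ 0 < Real.cos (θ b - ψ)} = #B :=
      card_filter_add_card_filter_not _
    have h4 : ∀ b, (0 ≤ Real.cos (θ b - (ψ + Real.pi)) ↔ ¬ 0 < Real.cos (θ b - ψ)) := by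
      intro b
      rw [← sub_sub, Real.cos_sub_pi, neg_nonneg, not_lt]
    simp only [h4] at h2
    have h5 : (#{b ∈ B | 0 < Real.cos (θ b - ψ)} : ℝ) + #{b ∈ B | ¬ 0 < Real.cos (θ b - ψ)} = #B := by
      exact_mod_cast h3
    linarith
  have hA : ∫ ψ in (-(Real.pi / 2))..(Real.pi / 2), N ψ ≤ M * 2 := by
    have h2 : ∫ ψ in (-(Real.pi / 2))..(Real.pi / 2), M * Real.cos ψ = M * 2 := by
      rw [intervalIntegral.integral_const_mul, integral_cos]
      simp; norm_num
    rw [← h2]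
    apply intervalIntegral.integral_mono_on (by linarith) (hint _ _)
      ((continuous_const.mul Real.continuous_cos).intervalIntegrable _ _)
    intro ψ hψ
    rw [hNeq]
    exact mul_le_mul_of_nonneg_right (hup ψ) (Real.cos_nonneg_of_mem_Icc hψ)
  have hB : ∫ ψ in (Real.pi / 2)..(3 * Real.pi / 2), N ψ ≤ (#B - M) * (-2) := by
    have h2 : ∫ ψ in (Real.pi / 2)..(3 * Real.pi / 2), (#B - M) * Real.cos ψ = (#B - M) * (-2) := by
      rw [intervalIntegral.integral_const_mul, integral_cos,
        show 3 * Real.pi / 2 = Real.pi / 2 + Real.pi by ring, Real.sin_add_pi]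
      simp; norm_num
    rw [← h2]
    apply intervalIntegral.integral_mono_on (by linarith) (hint _ _)
      ((continuous_const.mul Real.continuous_cos).intervalIntegrable _ _)
    intro ψ hψ
    rw [hNeq]
    exact mul_le_mul_of_nonpos_right (hlow ψ)
      (Real.cos_nonpos_of_pi_div_two_le_of_le hψ.1 (by linarith [hψ.2]))
  rw [← intervalIntegral.integral_add_adjacent_intervals (hint _ (Real.pi / 2)) (hint _ _)] at htot
  linarith

open Classical in
/-- Freiman's lemma on exponential sums: if every interval of `(p + 1) / 2` residues meets `B` in
at most `M` points, then the exponential sum over `B` has modulus at most `2 M - |B|`. -/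
lemma norm_charSum_le {p : ℕ} [NeZero p] (hodd : Odd p) (B : Finset (ZMod p)) (M : ℕ)
    (hM : ∀ j : ZMod p, #{b ∈ B | ∃ i : ℕ, i ≤ (p - 1) / 2 ∧ b = j + i} ≤ M) :
    ‖∑ b ∈ B, ZMod.stdAddChar b‖ ≤ 2 * M - #B := by
  set z : ℂ := ∑ b ∈ B, ZMod.stdAddChar b with hz
  -- rotate the sum onto the positive real axis
  have h1 : ‖z‖ = ∑ b ∈ B, Real.cos (2 * Real.pi * b.val / p - z.arg) := by
    have h2 : (‖z‖ : ℂ) = z * Complex.exp (-(z.arg * Complex.I)) := by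
      nth_rewrite 2 [← Complex.norm_mul_exp_arg_mul_I z]
      rw [mul_assoc, ← Complex.exp_add]
      simp
    have h3 : ‖z‖ = (z * Complex.exp (-(z.arg * Complex.I))).re := by
      rw [← h2, Complex.ofReal_re]
    rw [h3]
    nth_rewrite 1 [hz]
    rw [sum_mul, Complex.re_sum]
    refine sum_congr rfl fun b _ => ?_
    rw [ZMod.stdAddChar_apply, ZMod.toCircle_apply, ← Complex.exp_add, ← Complex.exp_ofReal_mul_I_re]
    congr 2
    push_cast
    ring
  rw [h1]
  have := sum_cos_le B (fun b => 2 * Real.pi * b.val / p - z.arg) M (fun ψ => ?_)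
  · exact this
  · obtain ⟨j, hj⟩ := half_circle hodd (z.arg + ψ)
    have h4 := hM j
    refine le_trans ?_ (Nat.cast_le.2 h4)
    exact_mod_cast card_le_card (monotone_filter_right _ fun b _ hb => hj b (by
      rwa [sub_sub] at hb))

/-- The Fourier transform of the indicator function of `A`. -/
noncomputable def charSum {p : ℕ} [NeZero p] (A : Finset (ZMod p)) (t : ZMod p) : ℂ :=
  ∑ a ∈ A, ZMod.stdAddChar (t * a)

section Fourier
variable {p : ℕ} [NeZero p]

lemma sum_char (x : ZMod p) :
    ∑ t : ZMod p, ZMod.stdAddChar (t * x) = if x = 0 then (p : ℂ) else 0 := by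
  rw [AddChar.sum_mulShift x (ZMod.isPrimitive_stdAddChar p)]
  simp [ZMod.card]

lemma conj_charSum (A : Finset (ZMod p)) (t : ZMod p) :
    (starRingEnd ℂ) (charSum A t) = ∑ a ∈ A, ZMod.stdAddChar (t * -a) := by
  simp only [charSum, map_sum]
  refine sum_congr rfl fun a _ => ?_
  rw [← AddChar.map_neg_eq_conj, mul_neg]

lemma norm_charSum_zero (A : Finset (ZMod p)) : ‖charSum A 0‖ = #A := by
  simp [charSum]

lemma parseval (A : Finset (ZMod p)) : ∑ t, ‖charSum A t‖ ^ 2 = (p : ℝ) * #A := by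
  have h : ∑ t, charSum A t * (starRingEnd ℂ) (charSum A t) = (p : ℂ) * #A := by
    simp only [conj_charSum]
    simp only [charSum, sum_mul_sum, ← AddChar.map_add_eq_mul, ← mul_add]
    rw [sum_comm]
    have : ∀ a ∈ A, ∑ t : ZMod p, ∑ b ∈ A, (ZMod.stdAddChar (t * (a + -b)) : ℂ) = p := by
      intro a ha
      rw [sum_comm]
      simp only [sum_char, ← sub_eq_add_neg, sub_eq_zero]
      simp [ha]
    rw [sum_congr rfl this, sum_const, nsmul_eq_mul, mul_comm]
  have h2 : ((∑ t, ‖charSum A t‖ ^ 2 : ℝ) : ℂ) = ((p : ℝ) * #A : ℝ) := by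
    push_cast
    rw [← h]
    exact sum_congr rfl fun t _ => (Complex.mul_conj' _).symm
  exact_mod_cast h2

/-- The Fourier expression of the number of pairs in `A × A` whose sum lies in `A + A`, which is
`|A| ^ 2`. -/
lemma sum_cube (A : Finset (ZMod p)) :
    ∑ t, charSum A t * charSum A t * (starRingEnd ℂ) (charSum (A + A) t) = (p : ℂ) * (#A : ℂ) ^ 2 := by
  simp only [conj_charSum]
  have key : ∀ t : ZMod p, charSum A t * charSum A t * ∑ s ∈ A + A, ZMod.stdAddChar (t * -s) =
      ∑ a ∈ A, ∑ b ∈ A, ∑ s ∈ A + A, (ZMod.stdAddChar (t * (a + b + -s)) : ℂ) := by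
    intro t
    simp only [charSum]
    rw [sum_mul_sum, sum_mul]
    refine sum_congr rfl fun a _ => ?_
    rw [sum_mul_sum]
    simp only [← AddChar.map_add_eq_mul, ← mul_add]
  simp only [key]
  rw [sum_comm]
  have : ∀ a ∈ A, ∑ t : ZMod p, ∑ b ∈ A, ∑ s ∈ A + A,
      (ZMod.stdAddChar (t * (a + b + -s)) : ℂ) = p * #A := by
    intro a ha
    rw [sum_comm]
    have h2 : ∀ b ∈ A, ∑ t : ZMod p, ∑ s ∈ A + A,
        (ZMod.stdAddChar (t * (a + b + -s)) : ℂ) = p := by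
      intro b hb
      rw [sum_comm]
      simp only [sum_char, ← sub_eq_add_neg, sub_eq_zero]
      simp [add_mem_add ha hb]
    rw [sum_congr rfl h2, sum_const, nsmul_eq_mul, mul_comm]
  rw [sum_congr rfl this, sum_const, nsmul_eq_mul]
  ring

/-- If all nontrivial Fourier coefficients of `A` are at most `κ |A|`, then `A + A` is large: isolate
the trivial frequency in `sum_cube` and apply Cauchy–Schwarz and Parseval to the others. -/
lemma bias_bound (A : Finset (ZMod p)) (hA : A.Nonempty) (κ : ℝ)
    (h : ∀ t ≠ 0, ‖charSum A t‖ ≤ κ * #A) (hs : (#(A + A) : ℝ) < p) :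
    (#A : ℝ) * (p - #(A + A)) ≤ κ ^ 2 * (p - #A) * #(A + A) := by
  set n : ℝ := (#A : ℝ) with hn
  set s : ℝ := (#(A + A) : ℝ) with hs'
  have hn0 : 0 < n := by rw [hn]; exact_mod_cast hA.card_pos
  have hs0 : 0 ≤ s := Nat.cast_nonneg _
  have hpar : ∀ B : Finset (ZMod p),
      ∑ t ∈ univ.erase 0, ‖charSum B t‖ ^ 2 = (#B : ℝ) * (p - #B) := by
    intro B
    have := add_sum_erase univ (fun t => ‖charSum B t‖ ^ 2) (mem_univ (0 : ZMod p))
    rw [parseval, norm_charSum_zero] at this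
    linarith
  set X := ∑ t ∈ univ.erase 0, ‖charSum A t‖ * ‖charSum (A + A) t‖ with hX
  have hX0 : 0 ≤ X := sum_nonneg fun t _ => by positivity
  have hCS : X ^ 2 ≤ (n * (p - n)) * (s * (p - s)) := by
    have := sum_mul_sq_le_sq_mul_sq (univ.erase 0) (fun t => ‖charSum A t‖)
      (fun t => ‖charSum (A + A) t‖)
    rwa [hpar, hpar] at this
  have hcube : p * n ^ 2 ≤ n ^ 2 * s + κ * n * X := by
    have h1 : (p : ℝ) * n ^ 2 =
        ‖∑ t, charSum A t * charSum A t * (starRingEnd ℂ) (charSum (A + A) t)‖ := by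
      rw [sum_cube]; simp [hn]
    rw [h1]
    refine (norm_sum_le _ _).trans ?_
    simp only [norm_mul, RCLike.norm_conj]
    rw [← add_sum_erase univ _ (mem_univ (0 : ZMod p)), norm_charSum_zero, norm_charSum_zero,
      hX, mul_sum]
    gcongr ?_ + ?_
    · exact (by rw [sq] : (#A : ℝ) * #A * #(A + A) = n ^ 2 * s).le
    · apply sum_le_sum
      intro t ht
      rw [mul_assoc]
      exact mul_le_mul_of_nonneg_right (h t (mem_erase.1 ht).1) (by positivity)
  have h2 : n * (p - s) ≤ κ * X := by
    have : n * (n * (p - s)) ≤ n * (κ * X) := by linarith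
    exact le_of_mul_le_mul_left this hn0
  have hps : 0 < p - s := by linarith
  have h3 : (n * (p - s)) ^ 2 ≤ κ ^ 2 * X ^ 2 := by
    rw [← mul_pow]; gcongr
  have h4 : κ ^ 2 * X ^ 2 ≤ κ ^ 2 * ((n * (p - n)) * (s * (p - s))) := by gcongr
  have h5 : (n * (p - s)) * (n * (p - s)) ≤ (n * (p - s)) * (κ ^ 2 * (p - n) * s) := by
    calc _ = (n * (p - s)) ^ 2 := by ring
      _ ≤ _ := h3.trans h4
      _ = _ := by ring
  exact le_of_mul_le_mul_left h5 (by positivity)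

end Fourier

lemma alpha_lt {α ε : ℝ} (hε0 : 0 < ε) (hε1 : ε ≤ 3 / 4) (hα0 : 0 < α)
    (hα : 4 * α ^ 3 + (12 - 4 * ε) * α ^ 2 + (9 - 4 * ε) * α + (8 * ε - 7) = 0) : α < 1 / 2 := by
  by_contra! h
  nlinarith [mul_nonneg (sub_nonneg.2 h) hα0.le,
    mul_nonneg (mul_nonneg (sub_nonneg.2 h) hα0.le) hα0.le]

/-- The role of `α`: for `κ = (1 + 2 α) / 3` the cubic equation says `κ² (2 + α - ε) = 1 - ε`, and
the inequality of `bias_bound` fails for this `κ`. -/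
lemma arith {α ε n s p : ℝ} (hε0 : 0 < ε) (hε1 : ε ≤ 3 / 4) (hα0 : 0 < α)
    (hα : 4 * α ^ 3 + (12 - 4 * ε) * α ^ 2 + (9 - 4 * ε) * α + (8 * ε - 7) = 0)
    (hs0 : 0 < s) (h1 : s < (2 + α) * n) (h2 : s ≤ ε * p) :
    ((1 + 2 * α) / 3) ^ 2 * (p - n) * s < n * (p - s) := by
  have hα1 := alpha_lt hε0 hε1 hα0 hα
  set c := ((1 + 2 * α) / 3) ^ 2 with hc
  have hcα : c * (2 + α - ε) = 1 - ε := by rw [hc]; linear_combination hα / 9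
  have hc1 : c < 1 := by rw [hc]; nlinarith
  have hc0 : 0 ≤ c := sq_nonneg _
  have hp : 0 < p := by
    by_contra! h
    nlinarith
  have h3 : c * (2 + α) * p ≤ p - (1 - c) * s := by
    have : (1 - c) * s ≤ (1 - c) * (ε * p) := mul_le_mul_of_nonneg_left h2 (by linarith)
    have h4 : c * (2 + α) = 1 - ε + c * ε := by linarith
    rw [h4]; linarith
  have h5 : 0 < p - (1 - c) * s := by nlinarith
  have h6 : s * (p - (1 - c) * s) < (2 + α) * n * (p - (1 - c) * s) :=
    mul_lt_mul_of_pos_right h1 h5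
  have h7 : s * (c * (2 + α) * p) ≤ s * (p - (1 - c) * s) := mul_le_mul_of_nonneg_left h3 hs0.le
  have h8 : (2 + α) * (c * p * s) < (2 + α) * (n * (p - (1 - c) * s)) := by linarith
  have h9 := lt_of_mul_lt_mul_left h8 (by linarith)
  linarith

open Classical in
/-- Some dilate of `A` has more than `(|A + A| + 3) / 3` elements in an interval of `(p + 1) / 2`
residues; otherwise all nontrivial Fourier coefficients are at most `(1 + 2 α) / 3 * |A|`, which
`bias_bound` and `arith` exclude. -/
lemma exists_half {p : ℕ} [Fact p.Prime] {α ε : ℝ} (hε0 : 0 < ε) (hε1 : ε ≤ 3 / 4) (hα0 : 0 < α)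
    (hα : 4 * α ^ 3 + (12 - 4 * ε) * α ^ 2 + (9 - 4 * ε) * α + (8 * ε - 7) = 0)
    (A : Finset (ZMod p)) (hA : A.Nonempty)
    (h1 : (#(A + A) : ℝ) ≤ (2 + α) * #A - 3) (h2 : (#(A + A) : ℝ) ≤ ε * p) :
    ∃ t : ZMod p, t ≠ 0 ∧ ∃ j : ZMod p,
      #(A + A) + 4 ≤ 3 * #{a ∈ A | ∃ i : ℕ, i ≤ (p - 1) / 2 ∧ t * a = j + i} := by
  have hp : p.Prime := Fact.out
  have hα1 := alpha_lt hε0 hε1 hα0 hα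
  have hn1 : 1 ≤ #A := hA.card_pos
  have hns : #A ≤ #(A + A) := card_le_card_add_right hA
  have hp0 : (0 : ℝ) < p := by exact_mod_cast hp.pos
  have hsp : 4 * #(A + A) ≤ 3 * p := by
    have : (4 * #(A + A) : ℝ) ≤ 3 * p := by nlinarith
    exact_mod_cast this
  have hodd : Odd p := by
    refine hp.odd_of_ne_two fun h => ?_
    have h3 : #A = 1 := by omega
    have h4 : (1 : ℝ) ≤ #(A + A) := by exact_mod_cast (by omega : 1 ≤ #(A + A))
    rw [h3] at h1
    norm_num at h1
    linarith
  by_contra! hcon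
  have hs0 : (0 : ℝ) < #(A + A) := by exact_mod_cast (by omega : 0 < #(A + A))
  have hlt := arith hε0 hε1 hα0 hα (n := #A) hs0 (by linarith) h2
  refine absurd (bias_bound A hA ((1 + 2 * α) / 3) ?_ ?_) (not_le.2 hlt)
  · intro t ht
    have hinj : Function.Injective (fun a : ZMod p => t * a) := mul_right_injective₀ ht
    have h3 := norm_charSum_le hodd (A.image (fun a => t * a)) ((#(A + A) + 3) / 3) ?_
    · rw [sum_image hinj.injOn, card_image_of_injective _ hinj] at h3
      have h4 : (((#(A + A) + 3) / 3 : ℕ) : ℝ) ≤ (#(A + A) + 3) / 3 := by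
        have := Nat.cast_div_le (α := ℝ) (m := #(A + A) + 3) (n := 3)
        push_cast at this ⊢
        exact this
      refine h3.trans ?_
      linarith
    · intro j
      rw [filter_image, card_image_of_injective _ hinj]
      have := hcon t ht j
      omega
  · have : (#(A + A) : ℝ) ≤ 3 / 4 * p := by
      have : (4 * #(A + A) : ℝ) ≤ 3 * p := by exact_mod_cast hsp
      linarith
    linarith

/-! ### Rectification -/

section Core
variable {p : ℕ} [Fact p.Prime]

/-- The conclusion of the theorem: `A` is contained in a short progression and `A + A` contains a
long one, with a common difference. -/
def Good (A : Finset (ZMod p)) : Prop :=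
  ∃ g : ZMod p, g ≠ 0 ∧ ∃ PA P2A : Finset (ZMod p), IsAPWith g PA ∧ IsAPWith g P2A ∧
    A ⊆ PA ∧ #PA + #A ≤ #(A + A) + 1 ∧ P2A ⊆ A + A ∧ 2 * #A ≤ #P2A + 1

lemma exists_rep (W : ℤ) (x : ZMod p) : ∃ z : ℤ, W ≤ z ∧ z < W + p ∧ (z : ZMod p) = x := by
  refine ⟨W + (x - W).val, ?_, ?_, ?_⟩
  · omega
  · have := ZMod.val_lt (x - (W : ZMod p))
    omega
  · push_cast
    simp

lemma residue_inj {x y : ℤ} (W : ℤ) (hx : W ≤ x) (hx' : x < W + p) (hy : W ≤ y) (hy' : y < W + p)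
    (h : (x : ZMod p) = y) : x = y := by
  have h1 := (ZMod.intCast_eq_intCast_iff_dvd_sub x y p).1 h
  have := Int.eq_zero_of_abs_lt_dvd h1 (by rw [abs_lt]; constructor <;> omega)
  omega

lemma card_cast (X : Finset ℤ) (W : ℤ) (hX : ∀ x ∈ X, W ≤ x ∧ x < W + p) :
    #(X.image (fun z : ℤ => (z : ZMod p))) = #X :=
  card_image_of_injOn fun x hx y hy h =>
    residue_inj W (hX x hx).1 (hX x hx).2 (hX y hy).1 (hX y hy).2 h

lemma image_cast_add (X Y : Finset ℤ) : (X + Y).image (fun z : ℤ => (z : ZMod p)) =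
    X.image (fun z : ℤ => (z : ZMod p)) + Y.image (fun z : ℤ => (z : ZMod p)) :=
  image_add (Int.castAddHom (ZMod p))

lemma affine_add (A : Finset (ZMod p)) (v u : ZMod p) :
    A.image (fun x => v + u * x) + A.image (fun x => v + u * x) =
      (A + A).image (fun x => (v + v) + u * x) := by
  ext z
  simp only [mem_add, mem_image]
  constructor
  · rintro ⟨_, ⟨a, ha, rfl⟩, _, ⟨b, hb, rfl⟩, rfl⟩
    exact ⟨a + b, ⟨a, ha, b, hb, rfl⟩, by ring⟩
  · rintro ⟨_, ⟨a, ha, b, hb, rfl⟩, rfl⟩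
    exact ⟨_, ⟨a, ha, rfl⟩, _, ⟨b, hb, rfl⟩, by ring⟩

lemma affine_injective (v : ZMod p) {u : ZMod p} (hu : u ≠ 0) :
    Function.Injective (fun x => v + u * x) := fun x y h => by
  simpa [hu] using h

lemma IsAPWith.affine {g : ZMod p} {P : Finset (ZMod p)} (h : IsAPWith g P) (v u : ZMod p) :
    IsAPWith (u * g) (P.image (fun x => v + u * x)) := by
  obtain ⟨a, k, hk, rfl⟩ := h
  refine ⟨v + u * a, k, hk, ?_⟩
  rw [image_image]
  congr 1
  ext i
  simp only [Function.comp]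
  ring

lemma Good.affine {A : Finset (ZMod p)} (h : Good A) (v : ZMod p) {u : ZMod p} (hu : u ≠ 0) :
    Good (A.image (fun x => v + u * x)) := by
  obtain ⟨g, hg, PA, P2A, h1, h2, h3, h4, h5, h6⟩ := h
  have hc := fun (v : ZMod p) (X : Finset (ZMod p)) =>
    card_image_of_injective X (affine_injective v hu)
  refine ⟨u * g, mul_ne_zero hu hg, _, _, h1.affine v u, h2.affine (v + v) u,
    image_subset_image h3, ?_, ?_, ?_⟩
  · rw [affine_add, hc, hc, hc]; exact h4
  · rw [affine_add]; exact image_subset_image h5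
  · rw [hc, hc]; exact h6

/-- A set of residues in a short interval is a translate of the reduction of a set of integers
spanning an interval `[0, l]`. -/
lemma exists_lift (B : Finset (ZMod p)) (hB : B.Nonempty) (c : ZMod p) (m : ℕ)
    (h : ∀ b ∈ B, ∃ i : ℕ, i ≤ m ∧ b = c + i) :
    ∃ (v : ZMod p) (X : Finset ℤ) (l : ℕ), l ≤ m ∧ 0 ∈ X ∧ (l : ℤ) ∈ X ∧
      (∀ x ∈ X, 0 ≤ x ∧ x ≤ l) ∧ B = X.image (fun z : ℤ => v + z) := by
  set Y : Finset ℤ := {z ∈ Icc (0 : ℤ) m | c + (z : ZMod p) ∈ B} with hY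
  have hYmem : ∀ b ∈ B, ∃ y ∈ Y, c + ((y : ℤ) : ZMod p) = b := by
    intro b hb
    obtain ⟨i, hi, rfl⟩ := h b hb
    exact ⟨i, mem_filter.2 ⟨mem_Icc.2 ⟨by omega, by omega⟩, by simpa using hb⟩, by simp⟩
  have hYne : Y.Nonempty := by
    obtain ⟨b, hb⟩ := hB
    obtain ⟨y, hy, _⟩ := hYmem b hb
    exact ⟨y, hy⟩
  have ha := min'_mem Y hYne
  have hb := max'_mem Y hYne
  set a := Y.min' hYne
  set b := Y.max' hYne
  have hab : a ≤ b := min'_le _ _ hb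
  have ha0 := mem_Icc.1 (mem_filter.1 ha).1
  have hb0 := mem_Icc.1 (mem_filter.1 hb).1
  refine ⟨c + (a : ZMod p), Y.image (fun y => y - a), (b - a).toNat, by omega, ?_, ?_, ?_, ?_⟩
  · exact mem_image.2 ⟨a, ha, by ring⟩
  · exact mem_image.2 ⟨b, hb, by omega⟩
  · intro x hx
    obtain ⟨y, hy, rfl⟩ := mem_image.1 hx
    have h1 : a ≤ y := min'_le _ _ hy
    have h2 : y ≤ b := le_max' _ _ hy
    omega
  · ext x
    rw [image_image]
    simp only [mem_image, Function.comp]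
    constructor
    · intro hx
      obtain ⟨y, hy, rfl⟩ := hYmem x hx
      exact ⟨y, hy, by push_cast; ring⟩
    · rintro ⟨y, hy, rfl⟩
      have := (mem_filter.1 hy).2
      push_cast
      convert this using 1
      ring

/-- Reduction modulo `p` preserves the sizes of `X` and of `X + X` when `X ⊆ [0, l]` with `2 l < p`. -/
lemma card_lift (v : ZMod p) (X : Finset ℤ) (l : ℕ) (hl : 2 * l < p)
    (hX : ∀ x ∈ X, 0 ≤ x ∧ x ≤ l) :
    #(X.image (fun z : ℤ => v + (z : ZMod p))) = #X ∧
      #(X.image (fun z : ℤ => v + (z : ZMod p)) + X.image (fun z : ℤ => v + (z : ZMod p))) =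
        #(X + X) := by
  have h1 : X.image (fun z : ℤ => v + (z : ZMod p)) =
      (X.image (fun z : ℤ => (z : ZMod p))).image (fun x => v + 1 * x) := by
    rw [image_image]
    congr 1
    ext z
    simp
  have hinj := fun v : ZMod p => affine_injective v (one_ne_zero (α := ZMod p))
  rw [h1, affine_add, card_image_of_injective _ (hinj _), card_image_of_injective _ (hinj _),
    ← image_cast_add]
  constructor
  · exact card_cast X 0 fun x hx => by have := hX x hx; omega
  · refine card_cast _ 0 fun x hx => ?_
    obtain ⟨a, ha, b, hb, rfl⟩ := mem_add.1 hx
    have := hX a ha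
    have := hX b hb
    omega

/-- The theorem for a set of small doubling contained in an interval of length less than `p / 2`:
there it is a statement about integers, given by `two_layer` and `long_interval`. -/
lemma good_of_short (A : Finset (ZMod p)) (hA : A.Nonempty) (c : ZMod p) (m : ℕ) (hm : 2 * m < p)
    (hm2 : m + 4 ≤ 2 * #A) (hs : #(A + A) + 4 ≤ 3 * #A)
    (h : ∀ a ∈ A, ∃ i : ℕ, i ≤ m ∧ a = c + i) : Good A := by
  obtain ⟨v, X, l, hlm, h0, hl, hX, hAX⟩ := exists_lift A hA c m h
  obtain ⟨hc1, hc2⟩ := card_lift v X l (by omega) hX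
  rw [← hAX] at hc1 hc2
  have h1 := two_layer X X X l hX hX (by omega) (fun d hd =>
    ⟨(hX d hd).1, (hX d hd).2, by simpa using add_mem_add hd h0, add_mem_add hd hl⟩) (by omega)
  obtain ⟨w, hw⟩ := long_interval X X l l hX h0 hl hX h0 le_rfl (by omega) (by omega)
  have hn : 1 ≤ #A := hA.card_pos
  have hcard : ∀ (a : ZMod p) (k : ℕ), k ≤ p →
      #((range k).image (fun i : ℕ => a + (i : ZMod p) * 1)) = k := by
    intro a k hk
    rw [card_image_of_injOn, card_range]
    intro i hi j hj hij
    have hi := mem_range.1 (mem_coe.1 hi)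
    have hj := mem_range.1 (mem_coe.1 hj)
    simp only [mul_one, add_right_inj] at hij
    have := residue_inj (p := p) (x := i) (y := j) 0 (by omega) (by omega) (by omega) (by omega)
      (by exact_mod_cast hij)
    omega
  have hlen : 2 * #A - 1 ≤ #(X + X) := by
    have : Ico w (w + (2 * #A - 1)) ⊆ X + X := by
      intro z hz
      have := mem_Ico.1 hz
      exact hw z (by omega) (by omega)
    have := card_le_card this
    rw [Int.card_Ico] at this
    omega
  have hsp : #(A + A) ≤ p := by
    have := card_le_univ (A + A)
    rwa [ZMod.card] at this
  refine ⟨1, one_ne_zero, _, _, ⟨v, l + 1, by omega, rfl⟩,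
    ⟨v + v + w, 2 * #A - 1, by omega, rfl⟩, ?_, ?_, ?_, ?_⟩
  · intro a ha
    rw [hAX] at ha
    obtain ⟨x, hx, rfl⟩ := mem_image.1 ha
    have := hX x hx
    refine mem_image.2 ⟨x.toNat, mem_range.2 (by omega), ?_⟩
    have h2 : ((x.toNat : ℤ) : ZMod p) = (x : ZMod p) := by rw [Int.toNat_of_nonneg this.1]
    rw [Int.cast_natCast] at h2
    rw [h2, mul_one]
  · rw [hcard _ _ (by omega)]
    omega
  · intro a ha
    obtain ⟨i, hi, rfl⟩ := mem_image.1 ha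
    have hi := mem_range.1 hi
    obtain ⟨x, hx, y, hy, hxy⟩ := mem_add.1 (hw (w + i) (by omega) (by omega))
    have h2 : ((x + y : ℤ) : ZMod p) = ((w + i : ℤ) : ZMod p) := by rw [hxy]
    push_cast at h2
    rw [hAX]
    exact mem_add.2 ⟨_, mem_image_of_mem _ hx, _, mem_image_of_mem _ hy, by
      rw [mul_one, add_add_add_comm, h2]; ring⟩
  · rw [hcard _ _ (by omega)]
    omega

/-- A large subset `X` of `A` in a short interval forces all of `A` into a short interval. By
`long_interval` the complement of `A + A` lies in a short interval, and so does its negative `C₀`.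
The sumset `X + C₀` avoids `-A` and is therefore small, and a second use of `long_interval` puts a
long interval into the complement of `-A`. -/
lemma core (A : Finset (ZMod p)) (X : Finset ℤ) (l : ℕ) (h0 : 0 ∈ X) (hl : (l : ℤ) ∈ X)
    (hX : ∀ x ∈ X, 0 ≤ x ∧ x ≤ l) (hXA : ∀ x ∈ X, (x : ZMod p) ∈ A)
    (hkl : l + #X ≤ #(A + A)) (hXX : #(X + X) ≤ #(A + A)) (hk : #(A + A) + 4 ≤ 3 * #X)
    (hsp : 4 * #(A + A) ≤ 3 * p) (hn : #X + 1 ≤ #A) :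
    ∃ c : ZMod p, ∀ a ∈ A, ∃ i : ℕ, i ≤ #(A + A) - #X ∧ a = c + i := by
  have hp : 0 < p := (Fact.out : p.Prime).pos
  set s := #(A + A) with hs
  set k := #X with hkdef
  set n := #A with hndef
  obtain ⟨w, hw⟩ := long_interval X X l l hX h0 hl hX h0 le_rfl (by omega) (by omega)
  have hXXA : ∀ z ∈ X + X, (z : ZMod p) ∈ A + A := by
    intro z hz
    obtain ⟨x, hx, y, hy, rfl⟩ := mem_add.1 hz
    push_cast
    exact add_mem_add (hXA x hx) (hXA y hy)
  -- integer representatives of minus the complement of `A + A`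
  set C₀ : Finset ℤ := {y ∈ Icc (-(w + p - 1)) (-(w + 2 * k - 1)) |
    -(y : ZMod p) ∉ A + A} with hC₀
  have hC₀mem : ∀ y ∈ C₀, (-(w + p - 1) ≤ y ∧ y ≤ -(w + 2 * k - 1)) ∧ -(y : ZMod p) ∉ A + A := by
    intro y hy
    have := mem_filter.1 hy
    exact ⟨mem_Icc.1 this.1, this.2⟩
  have hC₀card : (p : ℤ) - s ≤ #C₀ := by
    have h1 : (A + A)ᶜ ⊆ C₀.image (fun y : ℤ => -(y : ZMod p)) := by
      intro x hx
      have hx := mem_compl.1 hx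
      obtain ⟨z, hz1, hz2, rfl⟩ := exists_rep w x
      have hz3 : w + 2 * k - 1 ≤ z := by
        by_contra! hz
        exact hx (hXXA z (hw z hz1 (by omega)))
      refine mem_image.2 ⟨-z, mem_filter.2 ⟨mem_Icc.2 ⟨by omega, by omega⟩, ?_⟩, ?_⟩
      · push_cast; rwa [neg_neg]
      · push_cast; rw [neg_neg]
    have h2 := (card_le_card h1).trans card_image_le
    rw [card_compl, ZMod.card] at h2
    omega
  have hsum : (#(X + C₀) : ℤ) ≤ p - n := by
    have h1 := card_cast (p := p) (X + C₀) (-(w + p - 1)) (by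
      intro z hz
      obtain ⟨x, hx, y, hy, rfl⟩ := mem_add.1 hz
      have := hX x hx
      have := (hC₀mem y hy).1
      omega)
    have h2 : (X + C₀).image (fun z : ℤ => (z : ZMod p)) ⊆ (A.image (fun a => -a))ᶜ := by
      intro z hz
      obtain ⟨z', hz', rfl⟩ := mem_image.1 hz
      obtain ⟨x, hx, y, hy, rfl⟩ := mem_add.1 hz'
      rw [mem_compl]
      intro hcon
      obtain ⟨a, ha, hxy⟩ := mem_image.1 hcon
      apply (hC₀mem y hy).2
      refine mem_add.2 ⟨_, hXA x hx, a, ha, ?_⟩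
      push_cast at hxy
      linear_combination -hxy
    have h3 := card_le_card h2
    rw [card_compl, ZMod.card, card_image_of_injective _ neg_injective, h1] at h3
    have : n ≤ s := card_le_card_add_right (by rw [← card_pos]; omega)
    omega
  have hC₀ne : C₀.Nonempty := by rw [← card_pos]; omega
  have ha := min'_mem C₀ hC₀ne
  have hb := max'_mem C₀ hC₀ne
  set y₀ := C₀.min' hC₀ne with hy₀
  set y₁ := C₀.max' hC₀ne
  have ha0 := (hC₀mem _ ha).1
  have hb0 := (hC₀mem _ hb).1
  set C := C₀.image (fun y => y - y₀) with hC
  have hCcard : #C = #C₀ := card_image_of_injective _ (sub_left_injective)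
  have h0C : 0 ∈ C := mem_image.2 ⟨_, ha, by ring⟩
  have hlC : y₁ - y₀ ∈ C := mem_image.2 ⟨_, hb, rfl⟩
  have hCm : ∀ c ∈ C, 0 ≤ c ∧ c ≤ y₁ - y₀ := by
    intro c hc
    obtain ⟨y, hy, rfl⟩ := mem_image.1 hc
    have h1 : y₀ ≤ y := min'_le _ _ hy
    have h2 : y ≤ y₁ := le_max' _ _ hy
    omega
  have hXC : X + C = (X + C₀).image (fun z => z - y₀) := by
    ext z
    simp only [hC, mem_add, mem_image]
    constructor
    · rintro ⟨x, hx, _, ⟨y, hy, rfl⟩, rfl⟩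
      exact ⟨x + y, ⟨x, hx, y, hy, rfl⟩, by ring⟩
    · rintro ⟨_, ⟨x, hx, y, hy, rfl⟩, rfl⟩
      exact ⟨x, hx, _, ⟨y, hy, rfl⟩, by ring⟩
  have hXCcard : #(X + C) = #(X + C₀) := by
    rw [hXC]; exact card_image_of_injective _ (sub_left_injective)
  -- `long_interval` wants the set of larger diameter first
  obtain ⟨w', hw'⟩ : ∃ w' : ℤ, ∀ z, w' ≤ z → z < w' + (k + #C - 1) → z ∈ X + C := by
    rcases le_total (y₁ - y₀) (l : ℤ) with hml | hml
    · exact long_interval X C l (y₁ - y₀) hX h0 hl hCm h0C hml (by omega) (by omega)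
    · obtain ⟨w', hw'⟩ := long_interval C X (y₁ - y₀) l hCm h0C hlC hX h0 hml (by omega)
        (by rw [add_comm C X]; omega)
      refine ⟨w', fun z h1 h2 => ?_⟩
      rw [add_comm X C]
      exact hw' z h1 (by omega)
  refine ⟨((-(w' + y₀ + p - 1) : ℤ) : ZMod p), fun a ha => ?_⟩
  obtain ⟨z, hz1, hz2, hz3⟩ := exists_rep (w' + y₀) (-a)
  have hz4 : w' + y₀ + (k + #C - 1) ≤ z := by
    by_contra! hz
    have := hw' (z - y₀) (by omega) (by omega)
    rw [hXC] at this
    obtain ⟨z', hz', hzz⟩ := mem_image.1 this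
    obtain rfl : z' = z := by omega
    obtain ⟨x, hx, y, hy, rfl⟩ := mem_add.1 hz'
    apply (hC₀mem y hy).2
    refine mem_add.2 ⟨_, hXA x hx, a, ha, ?_⟩
    push_cast at hz3
    linear_combination hz3
  refine ⟨(w' + y₀ + p - 1 - z).toNat, by omega, ?_⟩
  have h2 : (((w' + y₀ + p - 1 - z).toNat : ℤ) : ZMod p) =
      ((w' + y₀ + p - 1 - z : ℤ) : ZMod p) := by
    rw [Int.toNat_of_nonneg (by omega)]
  rw [Int.cast_natCast] at h2
  rw [h2]
  push_cast
  linear_combination hz3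

open Classical in
/-- From a large part of a dilate of `A` in a half-interval to the conclusion: the part lifts to
integers, where `freiman` shows that it is short once the common factor of its elements is divided
out, and `core` extends this to all of `A`. -/
lemma good_of_half (A : Finset (ZMod p)) (t : ZMod p) (ht : t ≠ 0) (j : ZMod p)
    (hsp : 4 * #(A + A) ≤ 3 * p) (hA : A.Nonempty)
    (hM : #(A + A) + 4 ≤ 3 * #{a ∈ A | ∃ i : ℕ, i ≤ (p - 1) / 2 ∧ t * a = j + i}) : Good A := by
  have hp : 0 < p := (Fact.out : p.Prime).pos
  set A' : Finset (ZMod p) := {a ∈ A | ∃ i : ℕ, i ≤ (p - 1) / 2 ∧ t * a = j + i} with hA'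
  have hinj : Function.Injective (fun a : ZMod p => t * a) := mul_right_injective₀ ht
  set B := A'.image (fun a => t * a) with hB
  have hBcard : #B = #A' := card_image_of_injective _ hinj
  have hBne : B.Nonempty := by rw [← card_pos]; omega
  obtain ⟨v, Y, L, hL, h0, hLY, hY, hBY⟩ := exists_lift B hBne j ((p - 1) / 2) (by
    intro b hb
    obtain ⟨a, ha, rfl⟩ := mem_image.1 hb
    exact (mem_filter.1 ha).2)
  have hYcard : #Y = #A' := by
    rw [← hBcard, hBY]; exact (card_lift v Y L (by omega) hY).1.symm
  have hs1 : 1 ≤ #(A + A) := (hA.add hA).card_pos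
  have hL0 : 1 ≤ L := by
    by_contra! h
    have : Y ⊆ {0} := fun y hy => by
      have := hY y hy
      simp only [mem_singleton]
      omega
    have := card_le_card this
    rw [card_singleton] at this
    omega
  -- divide out the greatest common divisor
  obtain ⟨q, hq, hq1⟩ := extract_gcd (id : ℤ → ℤ) ⟨0, h0⟩
  set d := Y.gcd id with hd
  have hd0 : 0 ≤ d := by
    rw [hd, ← Finset.normalize_gcd]
    exact Int.nonneg_of_normalize_eq_self (normalize_idem _)
  have hqL := hq _ hLY
  have hdpos : 0 < d := by
    rcases hd0.lt_or_eq with h | h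
    · exact h
    · rw [← h] at hqL; simp at hqL; omega
  have hdL : d ≤ L := Int.le_of_dvd (by omega) ⟨_, hqL⟩
  set X := Y.image q with hX
  have hXY : Y = X.image (fun x => d * x) := by
    rw [hX, image_image]
    ext y
    simp only [mem_image, Function.comp]
    constructor
    · exact fun hy => ⟨y, hy, (hq y hy).symm⟩
    · rintro ⟨z, hz, rfl⟩
      rw [← hq z hz]; exact hz
  have hXcard : #X = #A' := by
    rw [← hYcard, hXY, card_image_of_injective _ (mul_right_injective₀ hdpos.ne')]
  have hq0 : q 0 = 0 := by
    have := hq 0 h0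
    simpa [hdpos.ne', eq_comm] using this
  have h0X : 0 ∈ X := mem_image.2 ⟨0, h0, hq0⟩
  have hXbd : ∀ x ∈ X, 0 ≤ x ∧ x ≤ q L := by
    intro x hx
    have h1 : d * x ∈ Y := by rw [hXY]; exact mem_image_of_mem _ hx
    have h2 := hY _ h1
    have h3 : (L : ℤ) = d * q L := hqL
    constructor
    · exact nonneg_of_mul_nonneg_right h2.1 hdpos
    · exact le_of_mul_le_mul_left (by omega) hdpos
  have hqL0 : 1 ≤ q L := by
    by_contra! h
    have h3 : (L : ℤ) = d * q L := hqL
    nlinarith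
  have hqLL : q L ≤ L := by
    have h3 : (L : ℤ) = d * q L := hqL
    nlinarith
  obtain ⟨l, hl⟩ := Int.eq_ofNat_of_zero_le (by omega : 0 ≤ q L)
  have hlX : (l : ℤ) ∈ X := by rw [← hl]; exact mem_image_of_mem _ hLY
  rw [hl] at hXbd hqL0 hqLL
  -- pass to the affine image of `A` containing the reduction of `X`
  set u : ZMod p := t⁻¹ * (d : ZMod p) with hu
  have hdp : (d : ZMod p) ≠ 0 := by
    intro h
    have := residue_inj (p := p) (x := d) (y := 0) 0 (by omega) (by omega) le_rfl (by omega)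
      (by rw [h]; simp)
    omega
  have hu0 : u ≠ 0 := mul_ne_zero (inv_ne_zero ht) hdp
  set v' : ZMod p := t⁻¹ * v with hv'
  set D := A.image (fun x => -(u⁻¹ * v') + u⁻¹ * x) with hD
  have hAD : A = D.image (fun x => v' + u * x) := by
    rw [hD, image_image]
    have : (fun x => v' + u * x) ∘ (fun x => -(u⁻¹ * v') + u⁻¹ * x) = id := by
      ext x
      simp only [Function.comp, id]
      field_simp
      ring
    rw [this, image_id]
  have hDcard : #D = #A := card_image_of_injective _ (affine_injective _ (inv_ne_zero hu0))
  have hDDcard : #(D + D) = #(A + A) := by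
    rw [hD, affine_add]; exact card_image_of_injective _ (affine_injective _ (inv_ne_zero hu0))
  have hXD : ∀ x ∈ X, (x : ZMod p) ∈ D := by
    intro x hx
    have h1 : d * x ∈ Y := by rw [hXY]; exact mem_image_of_mem _ hx
    have h2 : v + ((d * x : ℤ) : ZMod p) ∈ B := by rw [hBY]; exact mem_image_of_mem _ h1
    obtain ⟨a, ha, hax⟩ := mem_image.1 h2
    refine mem_image.2 ⟨a, (mem_filter.1 ha).1, ?_⟩
    have h3 : a = v' + u * x := by
      rw [hv', hu]
      push_cast at hax
      field_simp
      linear_combination hax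
    rw [h3]
    field_simp
    ring
  have himg := card_lift (p := p) 0 X l (by omega) hXbd
  simp only [zero_add] at himg
  have hXDs : X.image (fun z : ℤ => (z : ZMod p)) ⊆ D := by
    intro z hz
    obtain ⟨x, hx, rfl⟩ := mem_image.1 hz
    exact hXD x hx
  have hXX : #(X + X) ≤ #(A + A) := by
    rw [← himg.2, ← hDDcard]
    exact card_le_card (add_subset_add hXDs hXDs)
  have hFr := freiman X l (by omega) hXbd h0X hlX (by
    intro e he
    have h1 : (e : ℤ) ∣ Y.gcd q := Finset.dvd_gcd fun y hy => he _ (mem_image_of_mem _ hy)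
    rw [hq1] at h1
    have := Int.natAbs_dvd_natAbs.2 h1
    simpa using this) (by omega)
  rw [hAD]
  have hkn : #A' ≤ #A := card_le_card (filter_subset _ _)
  have hDne : D.Nonempty := hA.image _
  refine Good.affine ?_ v' hu0
  rcases hkn.eq_or_lt with hkn | hkn
  · have hDX : X.image (fun z : ℤ => (z : ZMod p)) = D :=
      eq_of_subset_of_card_le hXDs (by omega)
    refine good_of_short D hDne 0 l (by omega) (by omega) (by omega) ?_
    intro a ha
    rw [← hDX] at ha
    obtain ⟨x, hx, rfl⟩ := mem_image.1 ha
    obtain ⟨i, rfl⟩ := Int.eq_ofNat_of_zero_le (hXbd x hx).1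
    exact ⟨i, by have := hXbd _ hx; omega, by simp⟩
  · obtain ⟨c, hc⟩ := core D X l h0X hlX hXbd hXD (by omega) (by omega) (by omega) (by omega)
      (by omega)
    exact good_of_short D hDne c _ (by omega) (by omega) (by omega) hc

end Core

/-! ### Conclusion -/

theorem stmt1 (p : ℕ) (hp : p.Prime) (ε : ℝ) (hε0 : 0 < ε) (hε1 : ε ≤ 3 / 4)
    (A : Finset (ZMod p)) (hA : A.Nonempty)
    (r : ℤ) (hr : ((A + A).card : ℤ) = 2 * A.card + r)
    (α : ℝ) (hαpos : 0 < α)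
    (hα : 4 * α ^ 3 + (12 - 4 * ε) * α ^ 2 + (9 - 4 * ε) * α + (8 * ε - 7) = 0)
    (h1 : ((A + A).card : ℝ) ≤ (2 + α) * A.card - 3)
    (h2 : ((A + A).card : ℝ) ≤ ε * p) :
    ∃ g : ZMod p, g ≠ 0 ∧ ∃ PA P2A : Finset (ZMod p),
      IsAPWith g PA ∧ IsAPWith g P2A ∧
      A ⊆ PA ∧ (PA.card : ℤ) ≤ A.card + r + 1 ∧
      P2A ⊆ A + A ∧ 2 * (A.card : ℤ) - 1 ≤ (P2A.card : ℤ) := by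
  have : Fact p.Prime := ⟨hp⟩
  have hp0 : (0 : ℝ) < p := by exact_mod_cast hp.pos
  have hsp : 4 * #(A + A) ≤ 3 * p := by
    have : (4 * #(A + A) : ℝ) ≤ 3 * p := by nlinarith
    exact_mod_cast this
  obtain ⟨t, ht, j, hM⟩ := exists_half hε0 hε1 hαpos hα A hA h1 h2
  obtain ⟨g, hg, PA, P2A, a1, a2, a3, a4, a5, a6⟩ := good_of_half A t ht j hsp hA hM
  exact ⟨g, hg, PA, P2A, a1, a2, a3, by omega, a5, by omega⟩
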